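/- Let n ≥ 2, M ≥ 1, and let A = (a^{αβ}_{rs})_{1≤r,s≤n, 1≤α,β≤M} be a constant complex coefficient tensor satisfying the Legendre–Hadamard ellipticity condition, with associated second-order system L_A. Fix p ∈ (1,∞) and κ > 0. If u : ℝⁿ₊ → ℂ^M is of class C² and satisfies L_A u = 0 in ℝⁿ₊, the nontangential maximal function N_κ u belongs to L^p(ℝ^{n-1}), and for almost every x' ∈ ℝ^{n-1} the nontangential limit of u at (x',0) exists and equals 0, then u ≡ 0 in ℝⁿ₊. -/

import Mathlib

open MeasureTheory Filter Metric Real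
open scoped ENNReal NNReal Topology

noncomputable section

/-- The point `(x', t)` of `ℝⁿ`, where `x' ∈ ℝ^{n-1}` and `t ∈ ℝ` is the last coordinate. -/
def toUp {n : ℕ} (x' : EuclideanSpace ℝ (Fin (n - 1))) (t : ℝ) :
    EuclideanSpace ℝ (Fin n) :=
  (WithLp.equiv 2 (Fin n → ℝ)).symm
    (fun i => if h : (i : ℕ) < n - 1 then x' ⟨i, h⟩ else t)

/-- The first `n-1` coordinates of a point of `ℝⁿ`. -/
def xinit {n : ℕ} (x : EuclideanSpace ℝ (Fin n)) : EuclideanSpace ℝ (Fin (n - 1)) :=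
  (WithLp.equiv 2 (Fin (n - 1) → ℝ)).symm
    (fun i => x ⟨(i : ℕ), Nat.lt_of_lt_of_le i.isLt (Nat.sub_le n 1)⟩)

/-- The last coordinate of a point of `ℝⁿ`. -/
def xlast {n : ℕ} (x : EuclideanSpace ℝ (Fin n)) : ℝ :=
  if h : 0 < n then x ⟨n - 1, by omega⟩ else 0

/-- The upper half space `ℝⁿ₊`. -/
def upperHalfSpace (n : ℕ) : Set (EuclideanSpace ℝ (Fin n)) := {x | 0 < xlast x}

/-- The embedding `Fin (n-1) → Fin n`. -/
def finUp {n : ℕ} (i : Fin (n - 1)) : Fin n :=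
  ⟨(i : ℕ), Nat.lt_of_lt_of_le i.isLt (Nat.sub_le n 1)⟩

/-- The last index of `Fin n`. -/
def lastIdx (n : ℕ) (h : 0 < n) : Fin n := ⟨n - 1, by omega⟩

/-- Partial derivative along the `i`-th coordinate direction. -/
def pd {n : ℕ} {F : Type*} [NormedAddCommGroup F] [NormedSpace ℝ F]
    (i : Fin n) (u : EuclideanSpace ℝ (Fin n) → F) (x : EuclideanSpace ℝ (Fin n)) : F :=
  fderiv ℝ u x (EuclideanSpace.single i 1)

/-- Iterated mixed partial derivative along the string of coordinate directions `d`. -/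
def mpd {n : ℕ} {F : Type*} [NormedAddCommGroup F] [NormedSpace ℝ F]
    (k : ℕ) (d : Fin k → Fin n) (u : EuclideanSpace ℝ (Fin n) → F)
    (x : EuclideanSpace ℝ (Fin n)) : F :=
  iteratedFDeriv ℝ k u x (fun i => EuclideanSpace.single (d i) 1)

/-- The nontangential approach filter for the cone `Γ_κ(x')` (points written as `(y', t)`). -/
def ntFilter {n : ℕ} (κ : ℝ) (x' : EuclideanSpace ℝ (Fin (n - 1))) :
    Filter ((EuclideanSpace ℝ (Fin (n - 1))) × ℝ) :=
  (nhds (x', (0 : ℝ))) ⊓ Filter.principal {q | 0 < q.2 ∧ dist x' q.1 < κ * q.2}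

/-- The nontangential maximal function (aperture `κ`) of `u : ℝⁿ → F`,
as an `ℝ≥0∞`-valued function on `ℝ^{n-1}`. -/
def ntMax {n : ℕ} {F : Type*} [NormedAddCommGroup F] (κ : ℝ)
    (u : EuclideanSpace ℝ (Fin n) → F) (x' : EuclideanSpace ℝ (Fin (n - 1))) : ℝ≥0∞ :=
  ⨆ (y' : EuclideanSpace ℝ (Fin (n - 1))) (t : ℝ) (_ : 0 < t ∧ dist x' y' < κ * t),
    (‖u (toUp y' t)‖₊ : ℝ≥0∞)

/-- The `L^p` norm (`p ∈ (0,∞]`) of an `ℝ≥0∞`-valued function on `ℝ^m`. -/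
def lpNormE {m : ℕ} (g : EuclideanSpace ℝ (Fin m) → ℝ≥0∞) (p : ℝ≥0∞) : ℝ≥0∞ :=
  if p = ∞ then essSup g volume
  else (∫⁻ x', (g x') ^ p.toReal) ^ (1 / p.toReal)

/-- The Hardy–Littlewood maximal function. -/
def hlMax {m : ℕ} {F : Type*} [NormedAddCommGroup F]
    (f : EuclideanSpace ℝ (Fin m) → F) (x' : EuclideanSpace ℝ (Fin m)) : ℝ≥0∞ :=
  ⨆ (r : ℝ) (_ : 0 < r),
    (volume (ball x' r))⁻¹ * ∫⁻ y' in ball x' r, (‖f y'‖₊ : ℝ≥0∞)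

/-- The Legendre-Hadamard ellipticity condition for the coefficient tensor `A`,
where `A r s α β` stands for `a^{αβ}_{rs}`. -/
def LegendreHadamard {n M : ℕ} (A : Fin n → Fin n → Fin M → Fin M → ℂ) : Prop :=
  ∃ κ₀ : ℝ, 0 < κ₀ ∧ ∀ (ξ : Fin n → ℝ) (η : Fin M → ℂ),
    κ₀ * (∑ r, ξ r ^ 2) * (∑ a, ‖η a‖ ^ 2) ≤
      (∑ r, ∑ s, ∑ a, ∑ b, A r s a b * ξ r * ξ s * (starRingEnd ℂ) (η a) * η b).re

/-- `g` is the weak (distributional) mixed partial derivative of `f` of order `k`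
along the string of directions `d`. -/
def IsWeakDeriv {m : ℕ} {F : Type*} [NormedAddCommGroup F] [NormedSpace ℝ F]
    (k : ℕ) (d : Fin k → Fin m) (f g : EuclideanSpace ℝ (Fin m) → F) : Prop :=
  ∀ φ : EuclideanSpace ℝ (Fin m) → ℝ, ContDiff ℝ (⊤ : ℕ∞) φ → HasCompactSupport φ →
    ∫ x', (mpd k d φ x') • f x' = ((-1 : ℝ) ^ k) • ∫ x', φ x' • g x'

/-- The surface area `ω_{n-1}` of the unit sphere `S^{n-1}` in `ℝⁿ`. -/
def sphereArea (n : ℕ) : ℝ :=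
  (n : ℝ) * (volume (ball (0 : EuclideanSpace ℝ (Fin n)) (1 : ℝ))).toReal

/-- The parabolic dilation `F_t(x') = t^{1-n} F(x'/t)` of a matrix-valued kernel. -/
def matDil {n M : ℕ} (P : EuclideanSpace ℝ (Fin (n - 1)) → Matrix (Fin M) (Fin M) ℂ)
    (t : ℝ) (x' : EuclideanSpace ℝ (Fin (n - 1))) : Matrix (Fin M) (Fin M) ℂ :=
  (t ^ ((1 : ℤ) - (n : ℤ))) • P (t⁻¹ • x')

/-- The convolution `(P_t * f)(x')` of a dilated matrix kernel with a `ℂ^M`-valued function. -/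
def matConv {n M : ℕ} (P : EuclideanSpace ℝ (Fin (n - 1)) → Matrix (Fin M) (Fin M) ℂ)
    (f : EuclideanSpace ℝ (Fin (n - 1)) → EuclideanSpace ℂ (Fin M))
    (t : ℝ) (x' : EuclideanSpace ℝ (Fin (n - 1))) : EuclideanSpace ℂ (Fin M) :=
  (WithLp.equiv 2 (Fin M → ℂ)).symm
    (fun γ => ∫ y', ∑ α, matDil P t (x' - y') γ α * f y' α)

open scoped SchwartzMap LineDeriv in
def sd {n : ℕ} (r : Fin n) (f : 𝓢(EuclideanSpace ℝ (Fin n), ℂ)) : 𝓢(EuclideanSpace ℝ (Fin n), ℂ) :=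
  ∂_{EuclideanSpace.single r (1:ℝ)} f

open scoped SchwartzMap LineDeriv in
lemma sd_apply {n : ℕ} (r : Fin n) (f : 𝓢(EuclideanSpace ℝ (Fin n), ℂ)) (x) :
    sd r f x = pd r f x := rfl

open scoped FourierTransform SchwartzMap LineDeriv in
lemma fourier_pd_apply {n : ℕ} (f : 𝓢(EuclideanSpace ℝ (Fin n), ℂ)) (r : Fin n)
    (ξ : EuclideanSpace ℝ (Fin n)) :
    (𝓕 (sd r f)) ξ = (2 * π * Complex.I) * ((ξ r : ℝ) : ℂ) * (𝓕 f) ξ := by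
  unfold sd
  rw [SchwartzMap.fourier_lineDerivOp_eq]
  have : (inner ℝ · (EuclideanSpace.single r (1:ℝ)) : EuclideanSpace ℝ (Fin n) → ℝ).HasTemperateGrowth := by
    fun_prop
  rw [smul_apply, SchwartzMap.smulLeftCLM_apply this]
  simp [EuclideanSpace.inner_single_right]
  ring

open scoped FourierTransform SchwartzMap LineDeriv in
lemma garding_schwartz {n M : ℕ} (A : Fin n → Fin n → Fin M → Fin M → ℂ) (κ₀ : ℝ)
    (hA : ∀ (ξ : Fin n → ℝ) (η : Fin M → ℂ),
    κ₀ * (∑ r, ξ r ^ 2) * (∑ a, ‖η a‖ ^ 2) ≤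
      (∑ r, ∑ s, ∑ a, ∑ b, A r s a b * ξ r * ξ s * (starRingEnd ℂ) (η a) * η b).re)
    (w : Fin M → 𝓢(EuclideanSpace ℝ (Fin n), ℂ)) :
    κ₀ * ∑ r, ∑ a, ∫ x, ‖(sd r (w a)) x‖ ^ 2 ≤
     - (∑ r, ∑ s, ∑ a, ∑ b, A r s a b *
      ∫ x, inner ℂ (w a x) (sd r (sd s (w b)) x)).re := by
  have hint : ∀ (f g : 𝓢(EuclideanSpace ℝ (Fin n), ℂ)),
      Integrable (fun x => inner ℂ (f x) (g x)) := by
    intro f g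
    exact L2.integrable_inner (𝕜 := ℂ) (f.toLp 2) (g.toLp 2) |>.congr (by
      filter_upwards [f.coeFn_toLp 2 volume, g.coeFn_toLp 2 volume] with x h1 h2
      rw [h1, h2])
  have hint2 : ∀ (f : 𝓢(EuclideanSpace ℝ (Fin n), ℂ)),
      Integrable (fun x => ‖f x‖ ^ 2) := by
    intro f
    have := (f.memLp 2 volume).integrable_norm_pow (by norm_num)
    simpa using this
  have q1 : ∀ r a, ∫ x, ‖(sd r (w a)) x‖ ^ 2 = ∫ x, ‖𝓕 (sd r (w a)) x‖ ^ 2 := fun r a =>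
    (SchwartzMap.integral_norm_sq_fourier _).symm
  have q2 : ∀ r s a b, A r s a b * ∫ x, inner ℂ (w a x) (sd r (sd s (w b)) x) =
      ∫ x, A r s a b * inner ℂ (𝓕 (w a) x) (𝓕 (sd r (sd s (w b))) x) := fun r s a b => by
    rw [integral_const_mul, SchwartzMap.integral_inner_fourier_fourier]
  simp only [q1, q2]
  have e1 : ∑ r, ∑ s, ∑ a, ∑ b, ∫ x, A r s a b * inner ℂ (𝓕 (w a) x) (𝓕 (sd r (sd s (w b))) x)
     = ∫ x, ∑ r, ∑ s, ∑ a, ∑ b, A r s a b * inner ℂ (𝓕 (w a) x) (𝓕 (sd r (sd s (w b))) x) := by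
    have hi : ∀ r s a b, Integrable (fun x => A r s a b * inner ℂ (𝓕 (w a) x) (𝓕 (sd r (sd s (w b))) x)) :=
      fun r s a b => (hint _ _).const_mul _
    rw [integral_finsetSum _ (fun r _ => integrable_finsetSum _ fun s _ => integrable_finsetSum _ fun a _ => integrable_finsetSum _ fun b _ => hi r s a b)]
    refine Finset.sum_congr rfl fun r _ => ?_
    rw [integral_finsetSum _ (fun s _ => integrable_finsetSum _ fun a _ => integrable_finsetSum _ fun b _ => hi r s a b)]
    refine Finset.sum_congr rfl fun s _ => ?_
    rw [integral_finsetSum _ (fun a _ => integrable_finsetSum _ fun b _ => hi r s a b)]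
    refine Finset.sum_congr rfl fun a _ => ?_
    rw [integral_finsetSum _ (fun b _ => hi r s a b)]
  have hI : Integrable (fun x => ∑ r, ∑ s, ∑ a, ∑ b, A r s a b * inner ℂ (𝓕 (w a) x) (𝓕 (sd r (sd s (w b))) x)) :=
    (integrable_finsetSum _ fun r _ => integrable_finsetSum _ fun s _ => integrable_finsetSum _ fun a _ => integrable_finsetSum _ fun b _ => (hint _ _).const_mul _)
  rw [e1]
  have e2 : ∑ r, ∑ a, ∫ x, ‖𝓕 (sd r (w a)) x‖ ^ 2 = ∫ x, ∑ r, ∑ a, ‖𝓕 (sd r (w a)) x‖ ^ 2 := by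
    rw [integral_finsetSum _ (fun r _ => integrable_finsetSum _ fun a _ => hint2 _)]
    refine Finset.sum_congr rfl fun r _ => ?_
    rw [integral_finsetSum _ (fun a _ => hint2 _)]
  have hI2 : Integrable (fun x => ∑ r, ∑ a, ‖𝓕 (sd r (w a)) x‖ ^ 2) :=
    integrable_finsetSum _ (fun r _ => integrable_finsetSum _ fun a _ => hint2 _)
  rw [e2]
  have e3 := integral_re (𝕜 := ℂ) hI
  simp only [RCLike.re_eq_complex_re] at e3
  rw [← e3, ← integral_const_mul, ← integral_neg]
  refine integral_mono (hI2.const_mul _) hI.re.neg (fun ξ => ?_)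
  have h := hA (fun r => ξ r) (fun a => 𝓕 (w a) ξ)
  have k1 : ∑ r, ∑ a, ‖𝓕 (sd r (w a)) ξ‖ ^ 2 = (4 * π ^ 2) * ((∑ r, ξ r ^ 2) * (∑ a, ‖𝓕 (w a) ξ‖ ^ 2)) := by
    rw [Finset.sum_mul_sum, Finset.mul_sum]
    refine Finset.sum_congr rfl fun r _ => ?_
    rw [Finset.mul_sum]
    refine Finset.sum_congr rfl fun a _ => ?_
    rw [fourier_pd_apply]
    simp only [norm_mul, Complex.norm_I, Complex.norm_real, Complex.norm_ofNat, mul_pow, norm_eq_abs, sq_abs]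
    ring
  have k2 : ∑ r, ∑ s, ∑ a, ∑ b, A r s a b * inner ℂ (𝓕 (w a) ξ) (𝓕 (sd r (sd s (w b))) ξ)
    = ((-(4 * π ^ 2) : ℝ) : ℂ) * ∑ r, ∑ s, ∑ a, ∑ b, A r s a b * ξ r * ξ s * (starRingEnd ℂ) (𝓕 (w a) ξ) * 𝓕 (w b) ξ := by
    simp_rw [Finset.mul_sum]
    refine Finset.sum_congr rfl fun r _ => Finset.sum_congr rfl fun s _ => Finset.sum_congr rfl fun a _ => Finset.sum_congr rfl fun b _ => ?_
    rw [fourier_pd_apply, fourier_pd_apply, RCLike.inner_apply]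
    push_cast
    linear_combination (4 * (π:ℂ)^2 * A r s a b * ξ r * ξ s * (starRingEnd ℂ) (𝓕 (w a) ξ) * 𝓕 (w b) ξ) * Complex.I_sq
  simp only [RCLike.re_eq_complex_re]
  rw [k1, k2, Complex.re_ofReal_mul]
  have : 0 ≤ 4 * π ^ 2 := by positivity
  nlinarith [mul_le_mul_of_nonneg_left h this]

def mbump (n m : ℕ) : ContDiffBump (0 : EuclideanSpace ℝ (Fin n)) :=
  ⟨1 / (2 * ((m:ℝ) + 1)), 1 / ((m:ℝ) + 1), by positivity, by
    apply one_div_lt_one_div_of_lt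
    · positivity
    · have : (0:ℝ) ≤ m := by positivity
      linarith⟩

open scoped Convolution in
def moll {n : ℕ} (m : ℕ) (g : EuclideanSpace ℝ (Fin n) → ℂ) : EuclideanSpace ℝ (Fin n) → ℂ :=
  (mbump n m).normed volume ⋆[ContinuousLinearMap.lsmul ℝ ℝ, volume] g

lemma mbump_rOut_le (n m : ℕ) : (mbump n m).rOut ≤ 1 := by
  have : (0:ℝ) ≤ m := by positivity
  simp only [mbump]
  rw [div_le_one (by positivity)]
  linarith

lemma moll_contDiff {n : ℕ} (m : ℕ) {g : EuclideanSpace ℝ (Fin n) → ℂ} (hg : Continuous g) :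
    ContDiff ℝ (⊤ : ℕ∞) (moll m g) := by
  refine HasCompactSupport.contDiff_convolution_left (n := ((⊤ : ℕ∞))) _ ?_ ?_ hg.locallyIntegrable
  · exact (mbump n m).hasCompactSupport_normed
  · exact (mbump n m).contDiff_normed

lemma moll_compact {n : ℕ} (m : ℕ) {g : EuclideanSpace ℝ (Fin n) → ℂ} (hg : HasCompactSupport g) :
    HasCompactSupport (moll m g) :=
  (mbump n m).hasCompactSupport_normed.convolution _ hg

lemma pd_moll {n : ℕ} (m : ℕ) (r : Fin n) {g : EuclideanSpace ℝ (Fin n) → ℂ} (hg : ContDiff ℝ 1 g)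
    (hc : HasCompactSupport g) : pd r (moll m g) = moll m (pd r g) := by
  funext x
  have h := HasCompactSupport.hasFDerivAt_convolution_right (μ := volume)
    (ContinuousLinearMap.lsmul ℝ ℝ (E := ℂ)) hc
    ((mbump n m).continuous_normed (μ := volume)).locallyIntegrable hg x
  unfold pd moll
  rw [h.fderiv]
  exact convolution_precompR_apply (ContinuousLinearMap.lsmul ℝ ℝ (E := ℂ))
    ((mbump n m).continuous_normed (μ := volume)).locallyIntegrable (hc.fderiv ℝ)
     (hg.continuous_fderiv (by norm_num)) x _

lemma pd_cont {n : ℕ} {F : Type*} [NormedAddCommGroup F] [NormedSpace ℝ F] (r : Fin n) {g : EuclideanSpace ℝ (Fin n) → F} (hg : ContDiff ℝ 1 g) :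
    Continuous (pd r g) := by
  exact (hg.continuous_fderiv (by norm_num)).clm_apply continuous_const

lemma pd_contDiff {n : ℕ} {F : Type*} [NormedAddCommGroup F] [NormedSpace ℝ F] (r : Fin n) {g : EuclideanSpace ℝ (Fin n) → F} (hg : ContDiff ℝ 2 g) :
    ContDiff ℝ 1 (pd r g) := by
  exact (hg.fderiv_right (m := 1) (by norm_num)).clm_apply contDiff_const

lemma pd_compact {n : ℕ} {F : Type*} [NormedAddCommGroup F] [NormedSpace ℝ F] (r : Fin n) {g : EuclideanSpace ℝ (Fin n) → F} (hc : HasCompactSupport g) :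
    HasCompactSupport (pd r g) :=
  hc.fderiv_apply ℝ _

lemma moll_tendsto {n : ℕ} {g : EuclideanSpace ℝ (Fin n) → ℂ} (hg : Continuous g)
    (x : EuclideanSpace ℝ (Fin n)) : Tendsto (fun m => moll m g x) atTop (𝓝 (g x)) := by
  refine ContDiffBump.convolution_tendsto_right_of_continuous ?_ hg x
  exact tendsto_one_div_add_atTop_nhds_zero_nat

lemma moll_bound {n : ℕ} {g : EuclideanSpace ℝ (Fin n) → ℂ} (hg : Continuous g)
    (hc : HasCompactSupport g) : ∃ C R : ℝ, 0 ≤ C ∧ ∀ m x, ‖moll m g x‖ ≤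
      (closedBall (0 : EuclideanSpace ℝ (Fin n)) R).indicator (fun _ => C) x := by
  obtain ⟨C, hC⟩ := hc.exists_bound_of_continuous hg
  obtain ⟨R, hR⟩ := hc.isCompact.isBounded.subset_closedBall 0
  have hC0 : 0 ≤ C := (norm_nonneg _).trans (hC 0)
  refine ⟨3 * C, R + 1, by positivity, fun m x => ?_⟩
  by_cases hx : x ∈ closedBall (0 : EuclideanSpace ℝ (Fin n)) (R+1)
  · rw [Set.indicator_of_mem hx]
    have := ContDiffBump.dist_normed_convolution_le (φ := mbump n m) (μ := volume) (g := g) (x₀ := x)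
      (ε := 2 * C) hg.aestronglyMeasurable (fun y _ => by
        rw [dist_eq_norm]
        exact (norm_sub_le _ _).trans (by linarith [hC y, hC x]))
    rw [dist_eq_norm] at this
    have h2 : ‖moll m g x‖ ≤ ‖moll m g x - g x‖ + ‖g x‖ := by
      simpa using norm_add_le (moll m g x - g x) (g x)
    have h3 : ‖moll m g x - g x‖ ≤ 2 * C := this
    linarith [hC x]
  · rw [Set.indicator_of_notMem hx]
    have hz : ∀ y ∈ ball x 1, g y = 0 := by
      intro y hy
      by_contra h
      have : y ∈ closedBall (0 : EuclideanSpace ℝ (Fin n)) R := hR (subset_tsupport _ h)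
      apply hx
      rw [mem_closedBall] at *
      rw [mem_ball] at hy
      have := dist_triangle x y 0
      rw [dist_comm] at hy
      linarith
    have h0 : g x = 0 := hz x (by simp)
    have := ContDiffBump.dist_normed_convolution_le (φ := mbump n m) (μ := volume) (g := g) (x₀ := x)
      (ε := 0) hg.aestronglyMeasurable (fun y hy => by
        rw [h0, hz y (ball_subset_ball (mbump_rOut_le n m) hy)]; simp)
    rw [dist_eq_norm, h0, sub_zero] at this
    exact this

lemma moll_lim {n : ℕ} {G : Type*} [NormedAddCommGroup G] [NormedSpace ℝ G]
    (Φ : ℂ → ℂ → G) (hΦ : Continuous (fun q : ℂ × ℂ => Φ q.1 q.2)) (hΦb : ∀ a b, ‖Φ a b‖ ≤ ‖a‖ * ‖b‖)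
    {f g : EuclideanSpace ℝ (Fin n) → ℂ} (hf : Continuous f)
    (hfc : HasCompactSupport f) (hg : Continuous g) (hgc : HasCompactSupport g) :
    Tendsto (fun m => ∫ x, Φ (moll m f x) (moll m g x)) atTop (𝓝 (∫ x, Φ (f x) (g x))) := by
  obtain ⟨C, R, hC0, hC⟩ := moll_bound hf hfc
  obtain ⟨C', R', hC0', hC'⟩ := moll_bound hg hgc
  refine tendsto_integral_of_dominated_convergence
    ((closedBall (0 : EuclideanSpace ℝ (Fin n)) R).indicator (fun _ => C * C')) ?_ ?_ ?_ ?_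
  · intro m
    exact (hΦ.comp ((moll_contDiff m hf).continuous.prodMk (moll_contDiff m hg).continuous)).aestronglyMeasurable
  · rw [integrable_indicator_iff measurableSet_closedBall]
    exact integrableOn_const (by exact (measure_closedBall_lt_top).ne)
  · intro m
    refine Eventually.of_forall fun x => (hΦb _ _).trans ?_
    have h1 := hC m x
    have h2 : ‖moll m g x‖ ≤ C' := (hC' m x).trans (Set.indicator_le_self' (fun _ _ => hC0') x)
    by_cases hx : x ∈ closedBall (0 : EuclideanSpace ℝ (Fin n)) R
    · rw [Set.indicator_of_mem hx] at h1 ⊢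
      exact mul_le_mul h1 h2 (norm_nonneg _) hC0
    · rw [Set.indicator_of_notMem hx] at h1 ⊢
      have : ‖moll m f x‖ = 0 := le_antisymm h1 (norm_nonneg _)
      rw [this, zero_mul]
  · refine Eventually.of_forall fun x => ?_
    exact (hΦ.tendsto (f x, g x)).comp ((moll_tendsto hf x).prodMk_nhds (moll_tendsto hg x))

lemma garding_C2 {n M : ℕ} (A : Fin n → Fin n → Fin M → Fin M → ℂ) (κ₀ : ℝ)
    (hA : ∀ (ξ : Fin n → ℝ) (η : Fin M → ℂ),
    κ₀ * (∑ r, ξ r ^ 2) * (∑ a, ‖η a‖ ^ 2) ≤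
      (∑ r, ∑ s, ∑ a, ∑ b, A r s a b * ξ r * ξ s * (starRingEnd ℂ) (η a) * η b).re)
    (w : Fin M → EuclideanSpace ℝ (Fin n) → ℂ) (hw : ∀ a, ContDiff ℝ 2 (w a))
    (hc : ∀ a, HasCompactSupport (w a)) :
    κ₀ * ∑ r, ∑ a, ∫ x, ‖pd r (w a) x‖ ^ 2 ≤
     - (∑ r, ∑ s, ∑ a, ∑ b, A r s a b *
      ∫ x, inner ℂ (w a x) (pd r (pd s (w b)) x)).re := by
  have hw1 : ∀ a, ContDiff ℝ 1 (w a) := fun a => (hw a).of_le (by norm_num)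
  have key : ∀ m, κ₀ * ∑ r, ∑ a, ∫ x, ‖moll m (pd r (w a)) x‖ * ‖moll m (pd r (w a)) x‖ ≤
     - (∑ r, ∑ s, ∑ a, ∑ b, A r s a b *
      ∫ x, inner ℂ (moll m (w a) x) (moll m (pd r (pd s (w b))) x)).re := by
    intro m
    have := garding_schwartz A κ₀ hA (fun a => (moll_compact m (hc a)).toSchwartzMap (moll_contDiff m (hw a).continuous))
    have e1 : ∀ r a x, sd r ((moll_compact m (hc a)).toSchwartzMap (moll_contDiff m (hw a).continuous)) x
        = moll m (pd r (w a)) x := by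
      intro r a x
      rw [← pd_moll m r (hw1 a) (hc a)]
      rfl
    have e2 : ∀ r s a x, sd r (sd s ((moll_compact m (hc a)).toSchwartzMap (moll_contDiff m (hw a).continuous))) x
        = moll m (pd r (pd s (w a))) x := by
      intro r s a x
      rw [← pd_moll m r (pd_contDiff s (hw a)) (pd_compact s (hc a)), ← pd_moll m s (hw1 a) (hc a)]
      rfl
    have e3 : ∀ a x, (moll_compact m (hc a)).toSchwartzMap (moll_contDiff m (hw a).continuous) x = moll m (w a) x :=
      fun _ _ => rfl
    simp only [e1, e2, e3] at this
    simpa only [sq] using this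
  simp only [sq]
  refine le_of_tendsto_of_tendsto' (b := atTop) ?_ ?_ key
  · refine Tendsto.const_mul _ (tendsto_finsetSum _ fun r _ => tendsto_finsetSum _ fun a _ => ?_)
    exact moll_lim (fun a b => ‖a‖ * ‖b‖) (by fun_prop) (by simp) (pd_cont r (hw1 a)) (pd_compact r (hc a))
      (pd_cont r (hw1 a)) (pd_compact r (hc a))
  · refine Tendsto.neg ((Complex.continuous_re.tendsto _).comp ?_)
    refine tendsto_finsetSum _ fun r _ => tendsto_finsetSum _ fun s _ => tendsto_finsetSum _ fun a _ =>
      tendsto_finsetSum _ fun b _ => Tendsto.const_mul _ ?_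
    exact moll_lim (fun a b => inner ℂ a b) (by fun_prop) (fun a b => norm_inner_le_norm a b) (hw a).continuous (hc a)
      (pd_cont r (pd_contDiff s (hw b))) (pd_compact r (pd_compact s (hc b)))

def Kf {n : ℕ} (θ : EuclideanSpace ℝ (Fin n) → ℝ) (x : EuclideanSpace ℝ (Fin n)) : ℝ :=
  (∑ r, (pd r θ x) ^ 2) + ∑ r, ∑ s, |θ x * pd r (pd s θ) x|

lemma Kf_nonneg {n : ℕ} (θ : EuclideanSpace ℝ (Fin n) → ℝ) (x : EuclideanSpace ℝ (Fin n)) :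
    0 ≤ Kf θ x := by
  unfold Kf; positivity

lemma Kf_ge1 {n : ℕ} (θ : EuclideanSpace ℝ (Fin n) → ℝ) (x : EuclideanSpace ℝ (Fin n)) (r : Fin n) :
    (pd r θ x) ^ 2 ≤ Kf θ x := by
  unfold Kf
  have h1 : (pd r θ x) ^ 2 ≤ ∑ r, (pd r θ x) ^ 2 :=
    Finset.single_le_sum (f := fun r => (pd r θ x) ^ 2) (fun _ _ => by positivity) (Finset.mem_univ r)
  have h2 : 0 ≤ ∑ r, ∑ s, |θ x * pd r (pd s θ) x| := by positivity
  linarith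

lemma Kf_ge2 {n : ℕ} (θ : EuclideanSpace ℝ (Fin n) → ℝ) (x : EuclideanSpace ℝ (Fin n)) (r s : Fin n) :
    |θ x * pd r (pd s θ) x| ≤ Kf θ x := by
  unfold Kf
  have h1 : |θ x * pd r (pd s θ) x| ≤ ∑ s, |θ x * pd r (pd s θ) x| :=
    Finset.single_le_sum (f := fun s => |θ x * pd r (pd s θ) x|) (fun _ _ => by positivity) (Finset.mem_univ s)
  have h2 : ∑ s, |θ x * pd r (pd s θ) x| ≤ ∑ r, ∑ s, |θ x * pd r (pd s θ) x| :=
    Finset.single_le_sum (f := fun r => ∑ s, |θ x * pd r (pd s θ) x|) (fun _ _ => by positivity) (Finset.mem_univ r)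
  have h3 : 0 ≤ ∑ r, (pd r θ x) ^ 2 := by positivity
  linarith

lemma pd_smul {n : ℕ} {F : Type*} [NormedAddCommGroup F] [NormedSpace ℝ F] {θ : EuclideanSpace ℝ (Fin n) → ℝ} {f : EuclideanSpace ℝ (Fin n) → F}
    {x : EuclideanSpace ℝ (Fin n)} (r : Fin n)
    (hθ : DifferentiableAt ℝ θ x) (hf : DifferentiableAt ℝ f x) :
    pd r (fun y => θ y • f y) x = θ x • pd r f x + pd r θ x • f x := by
  unfold pd
  rw [fderiv_fun_smul hθ hf]
  simp

lemma pd_add {n : ℕ} {F : Type*} [NormedAddCommGroup F] [NormedSpace ℝ F] {f g : EuclideanSpace ℝ (Fin n) → F}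
    {x : EuclideanSpace ℝ (Fin n)} (r : Fin n)
    (hθ : DifferentiableAt ℝ f x) (hf : DifferentiableAt ℝ g x) :
    pd r (fun y => f y + g y) x = pd r f x + pd r g x := by
  unfold pd
  rw [fderiv_fun_add hθ hf]
  simp

lemma pd_contDiffOn {n : ℕ} {F : Type*} [NormedAddCommGroup F] [NormedSpace ℝ F] (r : Fin n)
    {U : Set (EuclideanSpace ℝ (Fin n))} (hU : IsOpen U)
    {g : EuclideanSpace ℝ (Fin n) → F} (hg : ContDiffOn ℝ 2 g U) :
    ContDiffOn ℝ 1 (pd r g) U := by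
  exact (hg.fderiv_of_isOpen (m := 1) hU (by norm_num)).clm_apply contDiffOn_const

lemma pd_contOn {n : ℕ} {F : Type*} [NormedAddCommGroup F] [NormedSpace ℝ F] (r : Fin n)
    {U : Set (EuclideanSpace ℝ (Fin n))} (hU : IsOpen U)
    {g : EuclideanSpace ℝ (Fin n) → F} (hg : ContDiffOn ℝ 1 g U) :
    ContinuousOn (pd r g) U := by
  exact (hg.continuousOn_fderiv_of_isOpen hU (by norm_num)).clm_apply continuousOn_const

lemma pd_pd_smul {n : ℕ} {F : Type*} [NormedAddCommGroup F] [NormedSpace ℝ F] {U : Set (EuclideanSpace ℝ (Fin n))} (hU : IsOpen U)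
    {θ : EuclideanSpace ℝ (Fin n) → ℝ} {f : EuclideanSpace ℝ (Fin n) → F}
    {x : EuclideanSpace ℝ (Fin n)} (r s : Fin n) (hx : x ∈ U)
    (hθ : ContDiff ℝ 2 θ) (hf : ContDiffOn ℝ 2 f U) :
    pd r (pd s (fun y => θ y • f y)) x = θ x • pd r (pd s f) x + pd r θ x • pd s f x +
      (pd s θ x • pd r f x + pd r (pd s θ) x • f x) := by
  have hθd : Differentiable ℝ θ := hθ.differentiable (by norm_num)
  have hfd : ∀ y ∈ U, DifferentiableAt ℝ f y := fun y hy =>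
    (hf.differentiableOn (by norm_num)).differentiableAt (hU.mem_nhds hy)
  have h1 : pd s (fun y => θ y • f y) =ᶠ[𝓝 x] fun y => θ y • pd s f y + pd s θ y • f y := by
    filter_upwards [hU.mem_nhds hx] with y hy
    exact pd_smul s (hθd y) (hfd y hy)
  have h2 : DifferentiableAt ℝ (pd s f) x :=
    ((pd_contDiffOn s hU hf).differentiableOn (by norm_num)).differentiableAt (hU.mem_nhds hx)
  have h3 : DifferentiableAt ℝ (pd s θ) x := (pd_contDiff s hθ).differentiable (by norm_num) x
  have : pd r (pd s (fun y => θ y • f y)) x = pd r (fun y => θ y • pd s f y + pd s θ y • f y) x := by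
    unfold pd at h1 ⊢
    rw [h1.fderiv_eq]
  rw [this, pd_add r ((hθd x).fun_smul h2) (h3.fun_smul (hfd x hx)), pd_smul r (hθd x) h2, pd_smul r h3 (hfd x hx)]

lemma cont_mul_of_tsupport {n : ℕ} {U : Set (EuclideanSpace ℝ (Fin n))} (hU : IsOpen U)
    {k f : EuclideanSpace ℝ (Fin n) → ℝ} (hk : Continuous k) (hf : ContinuousOn f U)
    (hs : tsupport k ⊆ U) : Continuous (fun x => k x * f x) := by
  refine continuous_of_tsupport (fun x hx => ?_)
  have hx' : x ∈ U := hs (tsupport_mul_subset_left hx)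
  exact hk.continuousAt.mul (hf.continuousAt (hU.mem_nhds hx'))

lemma young_aux (δ K V p va t1 : ℝ) (hδ : 0 < δ) (hva : va ^ 2 ≤ V) (ht : t1 ^ 2 ≤ K)
    : va * t1 * p ≤ δ * p ^ 2 + K * V / (4 * δ) := by
  have h1 : (va * t1) ^ 2 ≤ K * V := by
    rw [mul_pow, mul_comm]
    exact mul_le_mul ht hva (sq_nonneg _) ((sq_nonneg _).trans ht)
  have h2 : va * t1 * p ≤ δ * p ^ 2 + (va * t1) ^ 2 / (4 * δ) := by
    have : δ * p ^ 2 + (va * t1) ^ 2 / (4 * δ) - va * t1 * p = (2 * δ * p - va * t1) ^ 2 / (4 * δ) := by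
      field_simp; ring
    have h3 : 0 ≤ (2 * δ * p - va * t1) ^ 2 / (4 * δ) := by positivity
    linarith
  have h3 : (va * t1) ^ 2 / (4 * δ) ≤ K * V / (4 * δ) := by gcongr
  linarith


lemma contDiff_of_tsupport' {n : ℕ} {m : ℕ} {f : EuclideanSpace ℝ (Fin n) → ℂ}
    (h : ∀ x ∈ tsupport f, ContDiffAt ℝ m f x) : ContDiff ℝ m f := by
  rw [contDiff_iff_contDiffAt]
  intro x
  by_cases hx : x ∈ tsupport f
  · exact h x hx
  · exact contDiffAt_const.congr_of_eventuallyEq (notMem_tsupport_iff_eventuallyEq.mp hx)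

lemma sq_aux (a b c G K : ℝ) (ha : 0 ≤ a) (hb : 0 ≤ b) (hc : 0 ≤ c) (h : c ≤ a + b) (h1 : a ^ 2 ≤ G) (h2 : b ^ 2 ≤ K) :
    c ^ 2 ≤ 2 * G + 2 * K := by
  nlinarith [sq_nonneg (a - b)]

lemma lam_aux (Λ κ₀ δ G S q : ℝ) (hΛ0 : 0 ≤ Λ) (hκ : 0 < κ₀) (hδ : δ = κ₀ / (4 * (Λ + 1))) (hG0 : 0 ≤ G) :
    Λ * (2 * δ * G + S * q) ≤ κ₀ / 2 * G + Λ * q * S := by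
  have : Λ * (2 * δ) ≤ κ₀ / 2 := by
    rw [hδ]
    have : Λ * (2 * (κ₀ / (4 * (Λ + 1)))) = κ₀ / 2 * (Λ / (Λ + 1)) := by field_simp; ring
    rw [this]
    have h1 : Λ / (Λ + 1) ≤ 1 := by rw [div_le_one (by positivity)]; linarith
    nlinarith
  have := mul_le_mul_of_nonneg_right this hG0
  nlinarith

lemma term_bound (a v1 v2 g1 g2 d : ℂ) (θ t1 t2 t12 δ K V G : ℝ) (hδ : 0 < δ)
    (hv1 : ‖v1‖ ^ 2 ≤ V) (hv2 : ‖v2‖ ^ 2 ≤ V) (h1 : t1 ^ 2 ≤ K) (h2 : t2 ^ 2 ≤ K)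
    (h12 : |θ * t12| ≤ K) (hG1 : ‖θ • g1 + t1 • v2‖ ^ 2 ≤ G) (hG2 : ‖θ • g2 + t2 • v2‖ ^ 2 ≤ G) :
    ‖a * inner ℂ (θ • v1) (θ • d + t1 • g2 + (t2 • g1 + t12 • v2)) - a * inner ℂ (θ • v1) (θ • d)‖ ≤
      ‖a‖ * (2 * δ * G + K * V * (1 / (2 * δ) + 3)) := by
  have hV : 0 ≤ V := (sq_nonneg _).trans hv1
  have hK : 0 ≤ K := (sq_nonneg _).trans h1
  rw [← mul_sub, norm_mul]
  refine mul_le_mul_of_nonneg_left ?_ (norm_nonneg _)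
  have e : inner ℂ (θ • v1) (θ • d + t1 • g2 + (t2 • g1 + t12 • v2)) - inner ℂ (θ • v1) (θ • d)
     = (starRingEnd ℂ v1) * (t1 • (θ • g2 + t2 • v2)) + (starRingEnd ℂ v1) * (t2 • (θ • g1 + t1 • v2))
       + ((-2 * t1 * t2) • (starRingEnd ℂ v1 * v2) + (θ * t12) • (starRingEnd ℂ v1 * v2)) := by
    simp only [RCLike.inner_apply, Complex.real_smul, map_mul, Complex.conj_ofReal]
    push_cast
    ring
  rw [e]
  have hva1 : |‖v1‖| ^ 2 ≤ V := by simpa using hv1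
  have b1 : ‖(starRingEnd ℂ v1) * (t1 • (θ • g2 + t2 • v2))‖ ≤ δ * G + K * V / (4 * δ) := by
    rw [norm_mul, norm_smul, RCLike.norm_conj, ← mul_assoc]
    refine (young_aux δ K V _ _ _ hδ hv1 (by simpa using h1)).trans ?_
    gcongr
  have b2 : ‖(starRingEnd ℂ v1) * (t2 • (θ • g1 + t1 • v2))‖ ≤ δ * G + K * V / (4 * δ) := by
    rw [norm_mul, norm_smul, RCLike.norm_conj, ← mul_assoc]
    refine (young_aux δ K V _ _ _ hδ hv1 (by simpa using h2)).trans ?_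
    gcongr
  have hvv : ‖starRingEnd ℂ v1 * v2‖ ≤ V := by
    rw [norm_mul, RCLike.norm_conj]
    nlinarith [sq_nonneg (‖v1‖ - ‖v2‖)]
  have htt : |-2 * t1 * t2| ≤ 2 * K := by
    rw [abs_le]; constructor <;> nlinarith [sq_nonneg (t1 - t2), sq_nonneg (t1 + t2)]
  have b3 : ‖(-2 * t1 * t2) • (starRingEnd ℂ v1 * v2)‖ ≤ 2 * K * V := by
    rw [norm_smul]
    exact mul_le_mul htt hvv (norm_nonneg _) (by positivity)
  have b4 : ‖(θ * t12) • (starRingEnd ℂ v1 * v2)‖ ≤ K * V := by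
    rw [norm_smul]
    exact mul_le_mul h12 hvv (norm_nonneg _) (by positivity)
  have e2 : 2 * δ * G + K * V * (1 / (2 * δ) + 3) = (δ * G + K * V / (4 * δ)) + (δ * G + K * V / (4 * δ)) + (2 * K * V + K * V) := by
    field_simp; ring
  rw [e2]
  refine (norm_add_le _ _).trans (add_le_add ((norm_add_le _ _).trans (add_le_add b1 b2)) ((norm_add_le _ _).trans (add_le_add b3 b4)))

lemma B_bound {n M : ℕ} (A : Fin n → Fin n → Fin M → Fin M → ℂ) (κ₀ δ θ K V G Λ : ℝ) (v : Fin M → ℂ)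
    (g : Fin n → Fin M → ℂ) (d : Fin n → Fin n → Fin M → ℂ) (t : Fin n → ℝ) (t2 : Fin n → Fin n → ℝ)
    (hκ₀ : 0 < κ₀) (hδ0 : 0 < δ) (hΛ : Λ = ∑ r, ∑ s, ∑ a, ∑ b, ‖A r s a b‖) (hΛ0 : 0 ≤ Λ)
    (hδ : δ = κ₀ / (4 * (Λ + 1))) (hG0 : 0 ≤ G)
    (hL : ∀ a, ∑ r, ∑ s, ∑ b, A r s a b * d r s b = 0)
    (hV : ∀ a, ‖v a‖ ^ 2 ≤ V) (ht : ∀ r, t r ^ 2 ≤ K) (ht2 : ∀ r s, |θ * t2 r s| ≤ K)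
    (hG : ∀ r b, ‖θ • g r b + t r • v b‖ ^ 2 ≤ G) :
    ‖∑ r, ∑ s, ∑ a, ∑ b, A r s a b * inner ℂ (θ • v a) (θ • d r s b + t r • g s b + (t s • g r b + t2 r s • v b))‖
      ≤ κ₀ / 2 * G + Λ * (1 / (2 * δ) + 3) * (K * V) := by
  have hz : ∑ r, ∑ s, ∑ a, ∑ b, A r s a b * inner ℂ (θ • v a) (θ • d r s b) = 0 := by
    have : ∑ a, (θ * starRingEnd ℂ (θ • v a)) * (∑ r, ∑ s, ∑ b, A r s a b * d r s b) = 0 := by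
      simp [hL]
    rw [← this]
    have : ∀ r, ∑ s, ∑ a, ∑ b, A r s a b * inner ℂ (θ • v a) (θ • d r s b)
       = ∑ a, ∑ s, ∑ b, A r s a b * inner ℂ (θ • v a) (θ • d r s b) := fun r => Finset.sum_comm
    simp_rw [this]
    rw [Finset.sum_comm]
    simp_rw [Finset.mul_sum]
    refine Finset.sum_congr rfl fun a _ => Finset.sum_congr rfl fun r _ => Finset.sum_congr rfl fun s _ => Finset.sum_congr rfl fun b _ => ?_
    simp only [RCLike.inner_apply, Complex.real_smul]
    ring
  rw [← sub_zero (∑ r, ∑ s, ∑ a, ∑ b, A r s a b * inner ℂ (θ • v a) (θ • d r s b + t r • g s b + (t s • g r b + t2 r s • v b))), ← hz]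
  simp only [← Finset.sum_sub_distrib]
  have hsum : ‖∑ r, ∑ s, ∑ a, ∑ b, (A r s a b * inner ℂ (θ • v a) (θ • d r s b + t r • g s b + (t s • g r b + t2 r s • v b)) - A r s a b * inner ℂ (θ • v a) (θ • d r s b))‖
     ≤ ∑ r, ∑ s, ∑ a, ∑ b, ‖A r s a b‖ * (2 * δ * G + (K * V) * (1 / (2 * δ) + 3)) := by
    refine norm_sum_le_of_le _ fun r _ => norm_sum_le_of_le _ fun s _ => norm_sum_le_of_le _ fun a _ => norm_sum_le_of_le _ fun b _ => ?_
    exact term_bound (A r s a b) (v a) (v b) (g r b) (g s b) (d r s b)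
      θ (t r) (t s) (t2 r s) δ K V G hδ0 (hV a) (hV b) (ht r) (ht s) (ht2 r s) (hG r b) (hG s b)
  refine hsum.trans ?_
  simp_rw [← Finset.sum_mul]
  rw [← hΛ]
  exact lam_aux Λ κ₀ δ G _ _ hΛ0 hκ₀ hδ hG0

set_option maxHeartbeats 4000000 in
lemma cacc {n M : ℕ} (A : Fin n → Fin n → Fin M → Fin M → ℂ) (κ₀ : ℝ) (hκ₀ : 0 < κ₀)
    (hA : ∀ (ξ : Fin n → ℝ) (η : Fin M → ℂ),
    κ₀ * (∑ r, ξ r ^ 2) * (∑ a, ‖η a‖ ^ 2) ≤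
      (∑ r, ∑ s, ∑ a, ∑ b, A r s a b * ξ r * ξ s * (starRingEnd ℂ) (η a) * η b).re) :
    ∃ C : ℝ, 0 ≤ C ∧ ∀ (U : Set (EuclideanSpace ℝ (Fin n))) (hU : IsOpen U)
      (v : Fin M → EuclideanSpace ℝ (Fin n) → ℂ) (hv : ∀ a, ContDiffOn ℝ 2 (v a) U)
      (hL : ∀ x ∈ U, ∀ a, ∑ r, ∑ s, ∑ b, A r s a b * pd r (pd s (v b)) x = 0)
      (θ : EuclideanSpace ℝ (Fin n) → ℝ) (hθ : ContDiff ℝ 2 θ) (hθc : HasCompactSupport θ)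
      (hθU : tsupport θ ⊆ U) (j : Fin n) (c : Fin M),
      Integrable (fun x => θ x ^ 2 * ‖pd j (v c) x‖ ^ 2) ∧
      Integrable (fun x => Kf θ x * ∑ a, ‖v a x‖ ^ 2) ∧ 
      ∫ x, θ x ^ 2 * ‖pd j (v c) x‖ ^ 2 ≤ C * ∫ x, Kf θ x * ∑ a, ‖v a x‖ ^ 2 := by
  obtain ⟨Λ, hΛ⟩ : ∃ q : ℝ , q = ∑ r, ∑ s, ∑ a, ∑ b, ‖A r s a b‖ := ⟨_, rfl⟩
  have hΛ0 : 0 ≤ Λ := by rw [hΛ]; positivity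
  obtain ⟨δ, hδ⟩ : ∃ q : ℝ , q = κ₀ / (4 * (Λ + 1)) := ⟨_, rfl⟩
  have hδ0 : 0 < δ := by rw [hδ]; positivity
  obtain ⟨C1, hC1⟩ : ∃ q : ℝ , q = Λ * (1 / (2 * δ) + 3) := ⟨_, rfl⟩
  have hC10 : 0 ≤ C1 := by rw [hC1]; positivity
  refine ⟨4 * C1 / κ₀ + 2, by positivity, ?_⟩
  intro U hU v hv hL θ hθ hθc hθU j c
  set w : Fin M → EuclideanSpace ℝ (Fin n) → ℂ := fun a y => θ y • v a y with hw
  have hwC : ∀ a, ContDiff ℝ 2 (w a) := fun a => by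
    refine contDiff_of_tsupport' (m := 2) (fun x hx => ?_)
    have hx' : x ∈ U := hθU (tsupport_smul_subset_left _ _ hx)
    exact hθ.contDiffAt.smul ((hv a).contDiffAt (hU.mem_nhds hx'))
  have hwc : ∀ a, HasCompactSupport (w a) := fun a => hθc.smul_right
  have hw1 : ∀ a, ContDiff ℝ 1 (w a) := fun a => (hwC a).of_le (by norm_num)
  have hθ1 : ContDiff ℝ 1 θ := hθ.of_le (by norm_num)
  have tsK : tsupport (Kf θ) ⊆ tsupport θ := by
    refine closure_minimal (fun x hx => ?_) (isClosed_tsupport _)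
    by_contra hx'
    apply hx
    have hz : ∀ r, pd r θ x = 0 := fun r => by
      have := fderiv_of_notMem_tsupport (𝕜 := ℝ) hx'
      unfold pd; rw [this]; rfl
    simp [Kf, hz, image_eq_zero_of_notMem_tsupport hx']
  have Kcont : Continuous (Kf θ) := by
    unfold Kf
    refine (continuous_finsetSum _ fun r _ => (pd_cont r hθ1).pow 2).add
      (continuous_finsetSum _ fun r _ => continuous_finsetSum _ fun s _ => ?_)
    exact (hθ.continuous.mul (pd_cont r (pd_contDiff s hθ))).abs
  have hKc : HasCompactSupport (Kf θ) := hθc.mono' (subset_closure.trans tsK)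
  have hvcont : ∀ a, ContinuousOn (v a) U := fun a => (hv a).continuousOn
  have I1 : Integrable (fun x => θ x ^ 2 * ‖pd j (v c) x‖ ^ 2) := by
    have hs : tsupport (fun x => θ x ^ 2) ⊆ U := by
      refine (closure_mono ?_).trans hθU
      intro x hx h
      exact hx (by simp [h])
    refine (cont_mul_of_tsupport hU (hθ.continuous.pow 2)
      ((pd_contOn j hU ((hv c).of_le (by norm_num))).norm.pow 2) hs).integrable_of_hasCompactSupport ?_
    have : HasCompactSupport (fun x => θ x ^ 2) := hθc.comp_left (g := fun y => y ^ 2) (by norm_num)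
    exact this.mul_right
  have I2 : Integrable (fun x => Kf θ x * ∑ a, ‖v a x‖ ^ 2) := by
    refine (cont_mul_of_tsupport hU Kcont
      (continuousOn_finsetSum _ fun a _ => (hvcont a).norm.pow 2) (tsK.trans hθU)).integrable_of_hasCompactSupport hKc.mul_right
  refine ⟨I1, I2, ?_⟩
  have I3' : ∀ r a, Integrable (fun x => ‖pd r (w a) x‖ ^ 2) := fun r a => by
    refine ((pd_cont r (hw1 a)).norm.pow 2).integrable_of_hasCompactSupport ?_
    have hh : HasCompactSupport (fun x => ‖pd r (w a) x‖) := (pd_compact r (hwc a)).norm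
    refine hh.mono (fun x hx h => ?_)
    apply hx
    show ‖pd r (w a) x‖ ^ 2 = 0
    have h' : ‖pd r (w a) x‖ = 0 := h
    rw [h']; norm_num
  obtain ⟨G, hG⟩ : ∃ q : EuclideanSpace ℝ (Fin n) → ℝ , q = fun x => ∑ r, ∑ a, ‖pd r (w a) x‖ ^ 2 := ⟨_, rfl⟩
  have hG0 : ∀ x, 0 ≤ G x := fun x => by rw [hG]; positivity
  have I3 : Integrable G := hG ▸ integrable_finsetSum _ fun r _ => integrable_finsetSum _ fun a _ => I3' r a
  have hGle : ∀ x r a, ‖pd r (w a) x‖ ^ 2 ≤ G x := fun x r a => by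
    have h1 : ‖pd r (w a) x‖ ^ 2 ≤ ∑ a, ‖pd r (w a) x‖ ^ 2 :=
      Finset.single_le_sum (f := fun a => ‖pd r (w a) x‖ ^ 2) (fun _ _ => by positivity) (Finset.mem_univ a)
    have h2 : ∑ a, ‖pd r (w a) x‖ ^ 2 ≤ G x := by
     rw [hG]
     exact
      Finset.single_le_sum (f := fun r => ∑ a, ‖pd r (w a) x‖ ^ 2) (fun _ _ => by positivity) (Finset.mem_univ r)
    linarith
  have hVle : ∀ x a, ‖v a x‖ ^ 2 ≤ ∑ a, ‖v a x‖ ^ 2 := fun x a =>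
      Finset.single_le_sum (f := fun a => ‖v a x‖ ^ 2) (fun _ _ => by positivity) (Finset.mem_univ a)
  have hVn : ∀ x, 0 ≤ ∑ a, ‖v a x‖ ^ 2 := fun x => by positivity
  have hdiff : ∀ x ∈ U, ∀ r a, pd r (w a) x = θ x • pd r (v a) x + pd r θ x • v a x := fun x hx r a =>
    pd_smul r (hθ1.differentiable (by norm_num) x)
      (((hv a).differentiableOn (by norm_num)).differentiableAt (hU.mem_nhds hx))
  have I4' : ∀ r s a b, Integrable (fun x => A r s a b * inner ℂ (w a x) (pd r (pd s (w b)) x)) := fun r s a b => by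
    refine (Continuous.integrable_of_hasCompactSupport ?_ ?_).const_mul _
    · simp only [RCLike.inner_apply]
      exact (pd_cont r (pd_contDiff s (hwC b))).mul (Complex.continuous_conj.comp (hwC a).continuous)
    · refine (hwc a).mono' (fun x hx => subset_tsupport _ ?_)
      intro h
      apply hx
      simp [h]
  obtain ⟨B, hB⟩ : ∃ q : EuclideanSpace ℝ (Fin n) → ℂ , q = fun x => ∑ r, ∑ s, ∑ a, ∑ b, A r s a b * inner ℂ (w a x) (pd r (pd s (w b)) x) := ⟨_, rfl⟩
  have I4 : Integrable B := hB ▸ integrable_finsetSum _ fun r _ => integrable_finsetSum _ fun s _ => integrable_finsetSum _ fun a _ => integrable_finsetSum _ fun b _ => I4' r s a b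
  have e1 : ∑ r, ∑ s, ∑ a, ∑ b, A r s a b * ∫ x, inner ℂ (w a x) (pd r (pd s (w b)) x) = ∫ x, B x := by
    rw [hB]
    simp_rw [← integral_const_mul]
    rw [integral_finsetSum _ (fun r _ => integrable_finsetSum _ fun s _ => integrable_finsetSum _ fun a _ => integrable_finsetSum _ fun b _ => I4' r s a b)]
    refine Finset.sum_congr rfl fun r _ => ?_
    rw [integral_finsetSum _ (fun s _ => integrable_finsetSum _ fun a _ => integrable_finsetSum _ fun b _ => I4' r s a b)]
    refine Finset.sum_congr rfl fun s _ => ?_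
    rw [integral_finsetSum _ (fun a _ => integrable_finsetSum _ fun b _ => I4' r s a b)]
    refine Finset.sum_congr rfl fun a _ => ?_
    rw [integral_finsetSum _ (fun b _ => I4' r s a b)]
  have e2 : ∑ r, ∑ a, ∫ x, ‖pd r (w a) x‖ ^ 2 = ∫ x, G x := by
    rw [hG]
    rw [integral_finsetSum _ (fun r _ => integrable_finsetSum _ fun a _ => I3' r a)]
    refine Finset.sum_congr rfl fun r _ => ?_
    rw [integral_finsetSum _ (fun a _ => I3' r a)]
  have hgard := garding_C2 A κ₀ hA w hwC hwc
  rw [e1, e2] at hgard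
  have hBle : ∀ x, ‖B x‖ ≤ κ₀ / 2 * G x + C1 * (Kf θ x * ∑ a, ‖v a x‖ ^ 2) := by
    intro x
    by_cases hx : x ∈ tsupport θ
    · have hxU := hθU hx
      have hBx : B x = ∑ r, ∑ s, ∑ a, ∑ b, A r s a b * inner ℂ (θ x • v a x) (θ x • pd r (pd s (v b)) x + pd r θ x • pd s (v b) x + (pd s θ x • pd r (v b) x + pd r (pd s θ) x • v b x)) := by
        rw [hB]
        refine Finset.sum_congr rfl fun r _ => Finset.sum_congr rfl fun s _ => Finset.sum_congr rfl fun a _ => Finset.sum_congr rfl fun b _ => ?_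
        rw [hw]
        rw [pd_pd_smul hU r s hxU hθ (hv b)]
      rw [hBx, hC1]
      exact B_bound A κ₀ δ (θ x) (Kf θ x) (∑ a, ‖v a x‖ ^ 2) (G x) Λ (fun a => v a x) (fun r b => pd r (v b) x)
        (fun r s b => pd r (pd s (v b)) x) (fun r => pd r θ x) (fun r s => pd r (pd s θ) x) hκ₀ hδ0 hΛ hΛ0 hδ (hG0 x)
        (hL x hxU) (hVle x) (Kf_ge1 θ x) (Kf_ge2 θ x) (fun r b => by
          have := hGle x r b
          rwa [hdiff x hxU] at this)
    · have hw0 : ∀ a, w a x = 0 := fun a => by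
        simp [hw, image_eq_zero_of_notMem_tsupport hx]
      have : B x = 0 := by simp [hB, hw0]
      rw [this, norm_zero]
      exact add_nonneg (mul_nonneg (half_pos hκ₀).le (hG0 x)) (mul_nonneg hC10 (mul_nonneg (Kf_nonneg θ x) (hVn x)))
  have h1 : κ₀ * ∫ x, G x ≤ κ₀ / 2 * (∫ x, G x) + C1 * ∫ x, Kf θ x * ∑ a, ‖v a x‖ ^ 2 := by
    refine hgard.trans ?_
    have : -(∫ x, B x).re ≤ ‖∫ x, B x‖ := (neg_le_abs _).trans (Complex.abs_re_le_norm _)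
    refine this.trans ((norm_integral_le_integral_norm _).trans ?_)
    rw [← integral_const_mul, ← integral_const_mul, ← integral_add (I3.const_mul _) (I2.const_mul _)]
    exact integral_mono I4.norm ((I3.const_mul _).add (I2.const_mul _)) hBle
  have h2 : ∫ x, θ x ^ 2 * ‖pd j (v c) x‖ ^ 2 ≤ 2 * (∫ x, G x) + 2 * ∫ x, Kf θ x * ∑ a, ‖v a x‖ ^ 2 := by
    rw [← integral_const_mul, ← integral_const_mul, ← integral_add (I3.const_mul _) (I2.const_mul _)]
    refine integral_mono I1 ((I3.const_mul _).add (I2.const_mul _)) (fun x => ?_)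
    by_cases hx : x ∈ tsupport θ
    · have hxU := hθU hx
      have g1 := hGle x j c
      have k1 : ‖pd j θ x • v c x‖ ^ 2 ≤ Kf θ x * ∑ a, ‖v a x‖ ^ 2 := by
        rw [norm_smul, mul_pow]
        refine mul_le_mul (by simpa using Kf_ge1 θ x j) (hVle x c) (by positivity) (Kf_nonneg θ x)
      have k2 : θ x • pd j (v c) x = pd j (w c) x - pd j θ x • v c x := by rw [hdiff x hxU]; simp
      have k3 : θ x ^ 2 * ‖pd j (v c) x‖ ^ 2 = ‖pd j (w c) x - pd j θ x • v c x‖ ^ 2 := by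
        rw [← k2, norm_smul, mul_pow]; simp
      have k4 := norm_sub_le (pd j (w c) x) (pd j θ x • v c x)
      simp only
      rw [k3]
      exact sq_aux _ _ _ _ _ (norm_nonneg _) (norm_nonneg _) (norm_nonneg _) k4 g1 k1
    · simp only [image_eq_zero_of_notMem_tsupport hx]
      have : 0 ≤ 2 * G x + 2 * (Kf θ x * ∑ a, ‖v a x‖ ^ 2) :=
        add_nonneg (mul_nonneg zero_le_two (hG0 x)) (mul_nonneg zero_le_two (mul_nonneg (Kf_nonneg θ x) (hVn x)))
      simpa using this
  have h3 : ∫ x, G x ≤ 2 * C1 / κ₀ * ∫ x, Kf θ x * ∑ a, ‖v a x‖ ^ 2 := by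
    have : κ₀ / 2 * ∫ x, G x ≤ C1 * ∫ x, Kf θ x * ∑ a, ‖v a x‖ ^ 2 := by linarith
    have h4 := mul_le_mul_of_nonneg_left this (show 0 ≤ 2 / κ₀ by positivity)
    have h5 : 2 / κ₀ * (κ₀ / 2 * ∫ x, G x) = ∫ x, G x := by field_simp
    rw [h5] at h4
    refine h4.trans (le_of_eq ?_)
    ring
  have : (4 * C1 / κ₀ + 2) * ∫ x, Kf θ x * ∑ a, ‖v a x‖ ^ 2 = 2 * (2 * C1 / κ₀ * ∫ x, Kf θ x * ∑ a, ‖v a x‖ ^ 2) + 2 * ∫ x, Kf θ x * ∑ a, ‖v a x‖ ^ 2 := by ring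
  rw [this]
  linarith

lemma pd_scale {n : ℕ} (r : Fin n) (f : EuclideanSpace ℝ (Fin n) → ℝ) (c : ℝ) :
    pd r (fun x => f (c • x)) = fun x => c * pd r f (c • x) := by
  funext x
  unfold pd
  rw [fderiv_comp_smul]
  simp

lemma pd_cmul {n : ℕ} (r : Fin n) (f : EuclideanSpace ℝ (Fin n) → ℝ) (c : ℝ) :
    pd r (fun x => c * f x) = fun x => c * pd r f x := by
  funext x
  unfold pd
  have := congrFun (fderiv_const_smul_field (𝕜 := ℝ) (f := f) c) x
  have h2 : fderiv ℝ (fun x => c * f x) x = _ := this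
  rw [h2]
  simp

lemma pd_pd_scale {n : ℕ} (r s : Fin n) (f : EuclideanSpace ℝ (Fin n) → ℝ) (c : ℝ) :
    pd r (pd s (fun x => f (c • x))) = fun x => c ^ 2 * pd r (pd s f) (c • x) := by
  rw [pd_scale, pd_cmul, pd_scale]
  funext x
  ring

/-- one-dimensional cutoff composed with a coordinate -/
def chi {n : ℕ} (l : Fin n) (x : EuclideanSpace ℝ (Fin n)) : ℝ := Real.smoothTransition (x l - 1)

lemma chi_contDiff {n : ℕ} (l : Fin n) : ContDiff ℝ 2 (chi l) := by
  unfold chi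
  exact Real.smoothTransition.contDiff.comp ((contDiff_piLp_apply (p := 2) (i := l)).sub contDiff_const)

lemma chi_pd {n : ℕ} (l r : Fin n) (f : ℝ → ℝ) (hf : Differentiable ℝ f) :
    pd r (fun x : EuclideanSpace ℝ (Fin n) => f (x l - 1)) =
      fun x => (EuclideanSpace.single r (1:ℝ) : EuclideanSpace ℝ (Fin n)) l * deriv f (x l - 1) := by
  funext x
  have h1 : HasFDerivAt (fun x : EuclideanSpace ℝ (Fin n) => x l - 1) (EuclideanSpace.proj l : EuclideanSpace ℝ (Fin n) →L[ℝ] ℝ) x := by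
    exact (EuclideanSpace.proj l : EuclideanSpace ℝ (Fin n) →L[ℝ] ℝ).hasFDerivAt.sub_const 1
  have h2 := (hf (x l - 1)).hasDerivAt.comp_hasFDerivAt x h1
  unfold pd
  have h3 : HasFDerivAt (fun x : EuclideanSpace ℝ (Fin n) => f (x l - 1)) _ x := h2
  rw [h3.fderiv]
  simp [mul_comm]

lemma chi_bounds {n : ℕ} (l : Fin n) : ∃ c : ℝ, 0 ≤ c ∧ (∀ r x, |pd r (chi l) x| ≤ c) ∧
    (∀ r s x, |pd r (pd s (chi l)) x| ≤ c) := by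
  have hs : ContDiff ℝ 2 Real.smoothTransition := Real.smoothTransition.contDiff
  have hd : ContDiff ℝ 1 (deriv Real.smoothTransition) := hs.deriv' 
  have hdd : Continuous (deriv (deriv Real.smoothTransition)) := hd.continuous_deriv (by norm_num)
  have hz : ∀ x, x ∉ Set.Icc (0:ℝ) 1 → deriv Real.smoothTransition x = 0 := fun x hx => by
    rw [Set.mem_Icc, not_and_or, not_le, not_le] at hx
    rcases hx with hx | hx
    · have : Real.smoothTransition =ᶠ[𝓝 x] fun _ => 0 := by
        filter_upwards [Iio_mem_nhds hx] with y hy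
        exact Real.smoothTransition.zero_of_nonpos (le_of_lt hy)
      rw [this.deriv_eq]; simp
    · have : Real.smoothTransition =ᶠ[𝓝 x] fun _ => 1 := by
        filter_upwards [Ioi_mem_nhds hx] with y hy
        exact Real.smoothTransition.one_of_one_le (le_of_lt hy)
      rw [this.deriv_eq]; simp
  have hc : HasCompactSupport (deriv Real.smoothTransition) := HasCompactSupport.intro isCompact_Icc hz
  obtain ⟨c1, h1⟩ := hc.exists_bound_of_continuous hd.continuous
  obtain ⟨c2, h2⟩ := hc.deriv.exists_bound_of_continuous hdd
  have hc1 : 0 ≤ c1 := (norm_nonneg _).trans (h1 0)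
  have hc2 : 0 ≤ c2 := (norm_nonneg _).trans (h2 0)
  have hsg : ∀ r : Fin n, |(EuclideanSpace.single r (1:ℝ) : EuclideanSpace ℝ (Fin n)) l| ≤ 1 := fun r => by
    simp only [PiLp.single_apply]; split_ifs <;> simp
  refine ⟨c1 + c2, by positivity, fun r x => ?_, fun r s x => ?_⟩
  · unfold chi
    rw [chi_pd l r _ (hs.differentiable (by norm_num)), abs_mul]
    have := h1 (x l - 1)
    rw [Real.norm_eq_abs] at this
    nlinarith [hsg r, abs_nonneg (deriv Real.smoothTransition (x l - 1))]
  · unfold chi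
    rw [chi_pd l s _ (hs.differentiable (by norm_num)), pd_cmul, chi_pd l r _ (hd.differentiable (by norm_num)), abs_mul, abs_mul]
    have := h2 (x l - 1)
    rw [Real.norm_eq_abs] at this
    have h3 : |(EuclideanSpace.single r (1:ℝ) : EuclideanSpace ℝ (Fin n)) l| * |deriv (deriv Real.smoothTransition) (x l - 1)| ≤ c2 := by
      nlinarith [hsg r, abs_nonneg (deriv (deriv Real.smoothTransition) (x l - 1))]
    have h4 : 0 ≤ |(EuclideanSpace.single r (1:ℝ) : EuclideanSpace ℝ (Fin n)) l| * |deriv (deriv Real.smoothTransition) (x l - 1)| := by positivity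
    nlinarith [hsg s]

lemma chi_zero {n : ℕ} (l : Fin n) {x : EuclideanSpace ℝ (Fin n)} (hx : 2 < x l) :
    (∀ r, pd r (chi l) x = 0) ∧ (∀ r s, pd r (pd s (chi l)) x = 0) := by
  have ho : IsOpen {y : EuclideanSpace ℝ (Fin n) | 2 < y l} := isOpen_lt continuous_const (by fun_prop)
  have h1 : ∀ y : EuclideanSpace ℝ (Fin n), 2 < y l → ∀ r, pd r (chi l) y = 0 := fun y hy r => by
    have : chi l =ᶠ[𝓝 y] fun _ => 1 := by
      filter_upwards [ho.mem_nhds hy] with z hz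
      exact Real.smoothTransition.one_of_one_le (by have : 2 < z l := hz; linarith)
    unfold pd; rw [this.fderiv_eq]; simp
  refine ⟨h1 x hx, fun r s => ?_⟩
  have : pd s (chi l) =ᶠ[𝓝 x] fun _ => 0 := by
    filter_upwards [ho.mem_nhds hx] with z hz
    exact h1 z hz s
  show fderiv ℝ (pd s (chi l)) x _ = 0
  rw [this.fderiv_eq]; simp

def etaB (n : ℕ) : ContDiffBump (0 : EuclideanSpace ℝ (Fin n)) := ⟨1, 2, one_pos, one_lt_two⟩

lemma eta_bounds (n : ℕ) : ∃ c : ℝ, 0 ≤ c ∧ (∀ r x, |pd r (etaB n) x| ≤ c) ∧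
    (∀ r s x, |pd r (pd s (etaB n)) x| ≤ c) := by
  have hs : ContDiff ℝ 2 (etaB n) := (etaB n).contDiff
  have hc := (etaB n).hasCompactSupport
  have h1 : ∀ r, ∃ c, ∀ x, ‖pd r (etaB n) x‖ ≤ c := fun r =>
    (pd_compact r hc).exists_bound_of_continuous (pd_cont r (hs.of_le (by norm_num)))
  have h2 : ∀ r s, ∃ c, ∀ x, ‖pd r (pd s (etaB n)) x‖ ≤ c := fun r s =>
    (pd_compact r (pd_compact s hc)).exists_bound_of_continuous (pd_cont r (pd_contDiff s hs))
  choose c1 hc1 using h1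
  choose c2 hc2 using h2
  have p1 : ∀ r, 0 ≤ c1 r := fun r => (norm_nonneg _).trans (hc1 r 0)
  have p2 : ∀ r s, 0 ≤ c2 r s := fun r s => (norm_nonneg _).trans (hc2 r s 0)
  have q1 : 0 ≤ ∑ r, c1 r := Finset.sum_nonneg fun r _ => p1 r
  have q2 : 0 ≤ ∑ r, ∑ s, c2 r s := Finset.sum_nonneg fun r _ => Finset.sum_nonneg fun s _ => p2 r s
  refine ⟨(∑ r, c1 r) + ∑ r, ∑ s, c2 r s, by linarith, fun r x => ?_, fun r s x => ?_⟩
  · have := Finset.single_le_sum (f := c1) (fun r _ => p1 r) (Finset.mem_univ r)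
    have := hc1 r x
    rw [Real.norm_eq_abs] at this
    linarith
  · have h3 := Finset.single_le_sum (f := c2 r) (fun s _ => p2 r s) (Finset.mem_univ s)
    have h4 := Finset.single_le_sum (f := fun r => ∑ s, c2 r s) (fun r _ => Finset.sum_nonneg fun s _ => p2 r s) (Finset.mem_univ r)
    have := hc2 r s x
    rw [Real.norm_eq_abs] at this
    linarith

lemma alg1 (e ρ c f g f1 g1 : ℝ) (hf : |f| ≤ 1) (hg : |g| ≤ 1) (he : 0 ≤ e) (hρ : 0 ≤ ρ) (hc : 0 ≤ c)
   (h1 : |f1| ≤ e * c) (h2 : |g1| ≤ ρ * c) : (f * g1 + f1 * g) ^ 2 ≤ 2 * c ^ 2 * (ρ ^ 2 + e ^ 2) := by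
  have a1 : |f * g1| ≤ ρ * c := by
    rw [abs_mul]; nlinarith [abs_nonneg f, abs_nonneg g1]
  have a2 : |f1 * g| ≤ e * c := by
    rw [abs_mul]; nlinarith [abs_nonneg g, abs_nonneg f1]
  have b1 : (f * g1) ^ 2 ≤ (ρ * c) ^ 2 := sq_le_sq' (by linarith [(abs_le.mp a1).1]) (abs_le.mp a1).2
  have b2 : (f1 * g) ^ 2 ≤ (e * c) ^ 2 := sq_le_sq' (by linarith [(abs_le.mp a2).1]) (abs_le.mp a2).2
  nlinarith [sq_nonneg (f * g1 - f1 * g)]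

lemma abs_mul_le' {a b A B : ℝ} (ha : |a| ≤ A) (hb : |b| ≤ B) : |a * b| ≤ A * B := by
  rw [abs_mul]
  exact mul_le_mul ha hb (abs_nonneg _) ((abs_nonneg _).trans ha)

lemma alg2 (e ρ c f g f1 g1 f2 g2 f12 g12 : ℝ) (hf : |f| ≤ 1) (hg : |g| ≤ 1) (he : 0 ≤ e) (hρ : 0 ≤ ρ) (hc : 0 ≤ c)
   (h1 : |f1| ≤ e * c) (h2 : |g1| ≤ ρ * c) (h1' : |f2| ≤ e * c) (h2' : |g2| ≤ ρ * c)
   (h3 : |f12| ≤ e ^ 2 * c) (h4 : |g12| ≤ ρ ^ 2 * c) :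
   |f * g * (f * g12 + f1 * g2 + (f2 * g1 + f12 * g))| ≤ (2 * c ^ 2 + c) * (ρ ^ 2 + e ^ 2) := by
  have a0 := abs_mul_le' hf hg
  have a1 := abs_mul_le' hf h4
  have a2 := abs_mul_le' h1 h2'
  have a3 := abs_mul_le' h1' h2
  have a4 := abs_mul_le' h3 hg
  have a5 : |f * g12 + f1 * g2 + (f2 * g1 + f12 * g)| ≤ 1 * (ρ ^ 2 * c) + e * c * (ρ * c) + (e * c * (ρ * c) + e ^ 2 * c * 1) :=
    (abs_add_le _ _).trans (add_le_add ((abs_add_le _ _).trans (add_le_add a1 a2)) ((abs_add_le _ _).trans (add_le_add a3 a4)))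
  refine (abs_mul_le' a0 a5).trans ?_
  nlinarith [mul_nonneg (sq_nonneg c) (sq_nonneg (e - ρ)), mul_nonneg hc (sq_nonneg e), mul_nonneg hc (sq_nonneg ρ)]

lemma cutoff {n : ℕ} (l : Fin n) : ∃ C0 : ℝ, 0 ≤ C0 ∧ ∀ R ε : ℝ, 0 < R → 0 < ε →
    ∃ θ : EuclideanSpace ℝ (Fin n) → ℝ, ContDiff ℝ 2 θ ∧ HasCompactSupport θ ∧
      tsupport θ ⊆ {x | 0 < x l} ∧ (∀ x, ‖x‖ ≤ R → 2 * ε ≤ x l → θ x = 1) ∧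
      ∀ x, Kf θ x ≤ C0 * ((closedBall 0 (2 * R) ∩ {x | 0 < x l}).indicator (fun _ => (R⁻¹) ^ 2) x +
        (closedBall 0 (2 * R) ∩ {x | 0 < x l ∧ x l ≤ 2 * ε}).indicator (fun _ => (ε⁻¹) ^ 2) x) := by
  obtain ⟨c1, hc1, hχ1, hχ2⟩ := chi_bounds l
  obtain ⟨c2, hc2, hη1, hη2⟩ := eta_bounds n
  obtain ⟨c, hcd⟩ : ∃ c, c = c1 + c2 := ⟨_, rfl⟩
  have hc : 0 ≤ c := by rw [hcd]; positivity
  refine ⟨n * (2 * c ^ 2) + n * n * (2 * c ^ 2 + c), by positivity, fun R ε hR hε => ?_⟩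
  obtain ⟨f, hf⟩ : ∃ f : EuclideanSpace ℝ (Fin n) → ℝ, f = fun x => chi l (ε⁻¹ • x) := ⟨_, rfl⟩
  obtain ⟨g, hg⟩ : ∃ g : EuclideanSpace ℝ (Fin n) → ℝ, g = fun x => etaB n (R⁻¹ • x) := ⟨_, rfl⟩
  have hfC : ContDiff ℝ 2 f := by rw [hf]; exact (chi_contDiff l).comp (contDiff_const_smul _)
  have hgC : ContDiff ℝ 2 g := by
    rw [hg]; exact ((etaB n).contDiff (n := 2)).comp (contDiff_const_smul _)
  have hgs : tsupport g ⊆ closedBall 0 (2 * R) := by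
    refine closure_minimal (fun x hx => ?_) isClosed_closedBall
    by_contra h
    apply hx
    rw [hg]
    apply (etaB n).zero_of_le_dist
    simp only [mem_closedBall, dist_zero_right, not_le] at h ⊢
    show (2:ℝ) ≤ _
    rw [norm_smul, norm_inv, Real.norm_eq_abs, abs_of_pos hR]
    field_simp
    linarith
  have hfs : tsupport f ⊆ {x | ε ≤ x l} := by
    refine closure_minimal (fun x hx => ?_) (isClosed_le continuous_const (by fun_prop))
    by_contra h
    apply hx
    rw [hf]
    apply Real.smoothTransition.zero_of_nonpos
    simp only [Set.mem_ofPred_eq, not_le, PiLp.smul_apply, smul_eq_mul] at h ⊢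
    have : ε⁻¹ * x l ≤ 1 := by
      rw [inv_mul_le_iff₀ hε]; linarith
    linarith
  have hgc : HasCompactSupport g := (isCompact_closedBall _ _).of_isClosed_subset (isClosed_tsupport _) hgs
  obtain ⟨θ, hθ⟩ : ∃ θ : EuclideanSpace ℝ (Fin n) → ℝ, θ = fun x => f x • g x := ⟨_, rfl⟩
  have hθC : ContDiff ℝ 2 θ := by rw [hθ]; exact hfC.smul hgC
  have hθg : tsupport θ ⊆ tsupport g := by rw [hθ]; exact tsupport_smul_subset_right _ _
  have hθf : tsupport θ ⊆ tsupport f := by rw [hθ]; exact tsupport_smul_subset_left _ _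
  refine ⟨θ, hθC, hgc.mono' (subset_closure.trans hθg), fun x hx => lt_of_lt_of_le hε (hfs (hθf hx)), ?_, ?_⟩
  · intro x hx hxl
    have e1 : f x = 1 := by
      rw [hf]
      apply Real.smoothTransition.one_of_one_le
      simp only [PiLp.smul_apply, smul_eq_mul]
      have : 2 ≤ ε⁻¹ * x l := by
        rw [le_inv_mul_iff₀ hε]; linarith
      linarith
    have e2 : g x = 1 := by
      rw [hg]
      apply (etaB n).one_of_mem_closedBall
      simp only [mem_closedBall, dist_zero_right]
      show _ ≤ (1:ℝ)
      rw [norm_smul, norm_inv, Real.norm_eq_abs, abs_of_pos hR]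
      field_simp
      exact hx
    simp [hθ, e1, e2]
  · intro x
    by_cases hx : x ∈ tsupport θ
    swap
    · have hz : ∀ r, pd r θ x = 0 := fun r => by
        have := fderiv_of_notMem_tsupport (𝕜 := ℝ) hx
        unfold pd; rw [this]; rfl
      have : Kf θ x = 0 := by simp [Kf, hz, image_eq_zero_of_notMem_tsupport hx]
      rw [this]
      refine mul_nonneg (by positivity) (add_nonneg ?_ ?_)
      · exact Set.indicator_nonneg (fun _ _ => by positivity) _
      · exact Set.indicator_nonneg (fun _ _ => by positivity) _
    have hxB : x ∈ closedBall 0 (2 * R) := hgs (hθg hx)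
    have hxl : 0 < x l := lt_of_lt_of_le hε (hfs (hθf hx))
    rw [Set.indicator_of_mem (show x ∈ closedBall 0 (2 * R) ∩ {x | 0 < x l} from ⟨hxB, hxl⟩)]
    obtain ⟨e, he, he0, hef1, hef2⟩ : ∃ e : ℝ, e ^ 2 = (closedBall 0 (2 * R) ∩ {x | 0 < x l ∧ x l ≤ 2 * ε}).indicator (fun _ => (ε⁻¹) ^ 2) x ∧ 0 ≤ e ∧ (∀ r, |pd r f x| ≤ e * c) ∧ (∀ r s, |pd r (pd s f) x| ≤ e ^ 2 * c) := by
      rw [hf]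
      simp only [pd_pd_scale]
      simp only [pd_scale]
      by_cases h2 : x l ≤ 2 * ε
      · refine ⟨ε⁻¹, ?_, by positivity, fun r => ?_, fun r s => ?_⟩
        · rw [Set.indicator_of_mem]; exact ⟨hxB, hxl, h2⟩
        · rw [abs_mul, abs_of_pos (inv_pos.mpr hε)]
          have := hχ1 r (ε⁻¹ • x)
          gcongr
          linarith
        · rw [abs_mul, abs_of_nonneg (sq_nonneg _)]
          have := hχ2 r s (ε⁻¹ • x)
          gcongr
          linarith
      · have h3 : 2 < (ε⁻¹ • x) l := by
          simp only [PiLp.smul_apply, smul_eq_mul]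
          rw [lt_inv_mul_iff₀ hε]; linarith
        obtain ⟨z1, z2⟩ := chi_zero l h3
        refine ⟨0, ?_, le_rfl, fun r => ?_, fun r s => ?_⟩
        · rw [Set.indicator_of_notMem]
          · norm_num
          · exact fun h => h2 h.2.2
        · simp [z1]
        · simp [z2]
    rw [← he]
    have hg1 : ∀ r, |pd r g x| ≤ R⁻¹ * c := fun r => by
      rw [hg, pd_scale, abs_mul, abs_of_pos (inv_pos.mpr hR)]
      have := hη1 r (R⁻¹ • x)
      gcongr
      linarith
    have hg2 : ∀ r s, |pd r (pd s g) x| ≤ (R⁻¹) ^ 2 * c := fun r s => by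
      rw [hg, pd_pd_scale, abs_mul, abs_of_nonneg (sq_nonneg _)]
      have := hη2 r s (R⁻¹ • x)
      gcongr
      linarith
    have hf0 : |f x| ≤ 1 := by
      rw [hf]
      show |Real.smoothTransition _| ≤ 1
      rw [abs_of_nonneg (Real.smoothTransition.nonneg _)]
      exact Real.smoothTransition.le_one _
    have hg0 : |g x| ≤ 1 := by
      rw [hg, abs_of_nonneg (etaB n).nonneg]
      exact (etaB n).le_one
    have hRi : 0 ≤ R⁻¹ := by positivity
    have k1 : ∀ r, (pd r θ x) ^ 2 ≤ 2 * c ^ 2 * ((R⁻¹) ^ 2 + e ^ 2) := fun r => by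
      rw [hθ, pd_smul r (hfC.differentiable (by norm_num) x) (hgC.differentiable (by norm_num) x)]
      exact alg1 e R⁻¹ c _ _ _ _ hf0 hg0 he0 hRi hc (hef1 r) (hg1 r)
    have k2 : ∀ r s, |θ x * pd r (pd s θ) x| ≤ (2 * c ^ 2 + c) * ((R⁻¹) ^ 2 + e ^ 2) := fun r s => by
      rw [hθ, pd_pd_smul isOpen_univ r s (Set.mem_univ x) hfC hgC.contDiffOn]
      exact alg2 e R⁻¹ c _ _ _ _ _ _ _ _ hf0 hg0 he0 hRi hc (hef1 r) (hg1 r) (hef1 s) (hg1 s) (hef2 r s) (hg2 r s)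
    unfold Kf
    have s1 := Finset.sum_le_card_nsmul Finset.univ (fun r => (pd r θ x) ^ 2) _ (fun r _ => k1 r)
    have s2 := Finset.sum_le_card_nsmul Finset.univ (fun r => ∑ s, |θ x * pd r (pd s θ) x|) _ (fun r _ =>
      Finset.sum_le_card_nsmul Finset.univ (fun s => |θ x * pd r (pd s θ) x|) _ (fun s _ => k2 r s))
    simp only [Finset.card_univ, Fintype.card_fin, nsmul_eq_mul] at s1 s2
    refine (add_le_add s1 s2).trans (le_of_eq ?_)
    ring

def epsm (m : ℕ) : ℝ := 1 / ((m : ℝ) + 1)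

lemma epsm_pos (m : ℕ) : 0 < epsm m := by unfold epsm; positivity

lemma epsm_anti : Antitone epsm := fun a b h => by
  unfold epsm
  have : (a:ℝ) ≤ b := by exact_mod_cast h
  gcongr

lemma epsm_tendsto : Tendsto epsm atTop (𝓝 0) := tendsto_one_div_add_atTop_nhds_zero_nat

lemma slab_tendsto {n : ℕ} (l : Fin n) (R : ℝ) :
    Tendsto (fun m => volume ((closedBall (0 : EuclideanSpace ℝ (Fin n)) R) ∩ {x | 0 < x l ∧ x l ≤ 2 * epsm m})) atTop (𝓝 0) := by
  have hm : ∀ m, MeasurableSet ((closedBall (0 : EuclideanSpace ℝ (Fin n)) R) ∩ {x | 0 < x l ∧ x l ≤ 2 * epsm m}) := fun m => by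
    refine measurableSet_closedBall.inter ?_
    have h1 : IsOpen {x : EuclideanSpace ℝ (Fin n) | 0 < x l} := isOpen_lt continuous_const (by fun_prop)
    have h2 : IsClosed {x : EuclideanSpace ℝ (Fin n) | x l ≤ 2 * epsm m} := isClosed_le (by fun_prop) continuous_const
    exact h1.measurableSet.inter h2.measurableSet
  have h := tendsto_measure_iInter_atTop (μ := (volume : Measure (EuclideanSpace ℝ (Fin n)))) (fun m => (hm m).nullMeasurableSet)
    (fun a b hab x hx => ⟨hx.1, hx.2.1, hx.2.2.trans (by have := epsm_anti hab; linarith)⟩)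
    ⟨0, ((measure_mono Set.inter_subset_left).trans_lt measure_closedBall_lt_top).ne⟩
  have he : ⋂ m, ((closedBall (0 : EuclideanSpace ℝ (Fin n)) R) ∩ {x | 0 < x l ∧ x l ≤ 2 * epsm m}) = ∅ := by
    rw [Set.eq_empty_iff_forall_notMem]
    intro x hx
    rw [Set.mem_iInter] at hx
    have h0 : 0 < x l := (hx 0).2.1
    have h1 : x l ≤ 2 * 0 := ge_of_tendsto' (epsm_tendsto.const_mul 2) (fun m => (hx m).2.2)
    linarith
  rwa [he, measure_empty] at h

lemma caccStep {n M : ℕ} (A : Fin n → Fin n → Fin M → Fin M → ℂ) (κ₀ : ℝ) (hκ₀ : 0 < κ₀)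
    (hA : ∀ (ξ : Fin n → ℝ) (η : Fin M → ℂ),
    κ₀ * (∑ r, ξ r ^ 2) * (∑ a, ‖η a‖ ^ 2) ≤
      (∑ r, ∑ s, ∑ a, ∑ b, A r s a b * ξ r * ξ s * (starRingEnd ℂ) (η a) * η b).re) (l : Fin n) :
    ∃ C : ℝ, 0 ≤ C ∧ ∀ (v : Fin M → EuclideanSpace ℝ (Fin n) → ℂ) (hv : ∀ a, ContDiffOn ℝ 2 (v a) {x | 0 < x l})
      (hL : ∀ x : EuclideanSpace ℝ (Fin n), 0 < x l → ∀ a, ∑ r, ∑ s, ∑ b, A r s a b * pd r (pd s (v b)) x = 0)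
      (hD : ∀ R : ℝ, ∃ D : ℝ, ∀ x : EuclideanSpace ℝ (Fin n), 0 < x l → ‖x‖ ≤ R → ∀ a, ‖v a x‖ ≤ D * x l)
      (R : ℝ) (hR : 0 < R) (j : Fin n) (c : Fin M),
      ∫⁻ x in closedBall 0 R ∩ {x | 0 < x l}, ENNReal.ofReal (‖pd j (v c) x‖ ^ 2) ≤
        ENNReal.ofReal (C * (R⁻¹) ^ 2) * ∫⁻ x in closedBall 0 (2 * R) ∩ {x | 0 < x l}, ENNReal.ofReal (∑ a, ‖v a x‖ ^ 2) := by
  obtain ⟨C, hC0, hC⟩ := cacc A κ₀ hκ₀ hA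
  obtain ⟨C', hC0', hC'⟩ := cutoff l
  refine ⟨C * C', by positivity, fun v hv hL hD R hR j c => ?_⟩
  have hU : IsOpen {x : EuclideanSpace ℝ (Fin n) | 0 < x l} := isOpen_lt continuous_const (by fun_prop)
  obtain ⟨D, hD⟩ := hD (2 * R)
  obtain ⟨F, hF⟩ : ∃ F : EuclideanSpace ℝ (Fin n) → ℝ≥0∞, F = fun x => ENNReal.ofReal (‖pd j (v c) x‖ ^ 2) := ⟨_, rfl⟩
  obtain ⟨V, hV⟩ : ∃ V : EuclideanSpace ℝ (Fin n) → ℝ, V = fun x => ∑ a, ‖v a x‖ ^ 2 := ⟨_, rfl⟩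
  have hV0 : ∀ x, 0 ≤ V x := fun x => by rw [hV]; positivity
  obtain ⟨T, hT⟩ : ∃ T : ℕ → Set (EuclideanSpace ℝ (Fin n)), T = fun m => closedBall 0 (2 * R) ∩ {x | 0 < x l ∧ x l ≤ 2 * epsm m} := ⟨_, rfl⟩
  have hTm : ∀ m, MeasurableSet (T m) := fun m => by
    rw [hT]
    refine measurableSet_closedBall.inter ?_
    have h2 : IsClosed {x : EuclideanSpace ℝ (Fin n) | x l ≤ 2 * epsm m} := isClosed_le (by fun_prop) continuous_const
    exact hU.measurableSet.inter h2.measurableSet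
  have hBm : MeasurableSet (closedBall (0 : EuclideanSpace ℝ (Fin n)) (2 * R) ∩ {x | 0 < x l}) :=
    measurableSet_closedBall.inter hU.measurableSet
  have hVT : ∀ m x, x ∈ T m → V x ≤ M * (D * (2 * epsm m)) ^ 2 := fun m x hx => by
    rw [hT] at hx
    rw [hV]
    have hxl : 0 < x l := hx.2.1
    have hxl2 : x l ≤ 2 * epsm m := hx.2.2
    have hxR : ‖x‖ ≤ 2 * R := by simpa using hx.1
    have : ∀ a, ‖v a x‖ ^ 2 ≤ (D * (2 * epsm m)) ^ 2 := fun a => by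
      have h1 := hD x hxl hxR a
      have hD0 : 0 ≤ D := by
        by_contra h
        have := mul_neg_of_neg_of_pos (not_le.mp h) hxl
        linarith [norm_nonneg (v a x)]
      exact pow_le_pow_left₀ (norm_nonneg _) (h1.trans (mul_le_mul_of_nonneg_left hxl2 hD0)) 2
    have h2 := Finset.sum_le_card_nsmul Finset.univ (fun a => ‖v a x‖ ^ 2) _ (fun a _ => this a)
    simpa using h2
  have key : ∀ m, ∫⁻ x in closedBall 0 R ∩ {x | 2 * epsm m ≤ x l}, F x ≤
      ENNReal.ofReal (C * C' * (R⁻¹) ^ 2) * (∫⁻ x in closedBall 0 (2 * R) ∩ {x | 0 < x l}, ENNReal.ofReal (V x)) +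
       ENNReal.ofReal (C * C' * (M * (D * 2) ^ 2)) * volume (T m) := by
    intro m
    have hε := epsm_pos m
    obtain ⟨θ, h1, h2, h3, h4, h5⟩ := hC' R (epsm m) hR hε
    obtain ⟨i1, i2, i3⟩ := hC _ hU v hv hL θ h1 h2 h3 j c
    have a1 : ∫⁻ x in closedBall 0 R ∩ {x | 2 * epsm m ≤ x l}, F x ≤ ∫⁻ x, ENNReal.ofReal (θ x ^ 2 * ‖pd j (v c) x‖ ^ 2) := by
      rw [← lintegral_indicator]
      · refine lintegral_mono fun x => ?_
        by_cases hx : x ∈ closedBall 0 R ∩ {x : EuclideanSpace ℝ (Fin n) | 2 * epsm m ≤ x l}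
        · rw [Set.indicator_of_mem hx, h4 x (by simpa using hx.1) hx.2, hF]; simp
        · rw [Set.indicator_of_notMem hx]; exact zero_le
      · exact measurableSet_closedBall.inter (isClosed_le continuous_const (by fun_prop)).measurableSet
    refine a1.trans ?_
    rw [← ofReal_integral_eq_lintegral_ofReal i1 (ae_of_all _ fun x => by positivity)]
    refine (ENNReal.ofReal_le_ofReal i3).trans ?_
    rw [ENNReal.ofReal_mul hC0, ofReal_integral_eq_lintegral_ofReal i2 (ae_of_all _ fun x => mul_nonneg (Kf_nonneg _ _) (by positivity))]
    have a2 : ∀ x, ENNReal.ofReal (Kf θ x * ∑ a, ‖v a x‖ ^ 2) ≤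
        (closedBall 0 (2 * R) ∩ {x | 0 < x l}).indicator (fun x => ENNReal.ofReal (C' * (R⁻¹) ^ 2) * ENNReal.ofReal (V x)) x +
        (T m).indicator (fun _ => ENNReal.ofReal (C' * (M * (D * 2) ^ 2))) x := by
      intro x
      have b1 := mul_le_mul_of_nonneg_right (h5 x) (hV0 x)
      rw [hV] at b1
      refine (ENNReal.ofReal_le_ofReal b1).trans ?_
      have b2 := hVT m x
      rw [hT] at b2 ⊢
      rw [mul_add, add_mul]
      refine ENNReal.ofReal_add_le.trans (add_le_add ?_ ?_)
      · by_cases hx : x ∈ closedBall (0 : EuclideanSpace ℝ (Fin n)) (2 * R) ∩ {x | 0 < x l}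
        · rw [Set.indicator_of_mem hx, Set.indicator_of_mem hx, ← ENNReal.ofReal_mul (by positivity), hV]
        · rw [Set.indicator_of_notMem hx, Set.indicator_of_notMem hx]; simp
      · by_cases hx : x ∈ closedBall (0 : EuclideanSpace ℝ (Fin n)) (2 * R) ∩ {x | 0 < x l ∧ x l ≤ 2 * epsm m}
        · rw [Set.indicator_of_mem hx, Set.indicator_of_mem hx]
          apply ENNReal.ofReal_le_ofReal
          have b3 := b2 hx
          rw [hV] at b3
          refine (mul_le_mul_of_nonneg_left b3 (by positivity)).trans (le_of_eq ?_)
          field_simp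
        · rw [Set.indicator_of_notMem hx, Set.indicator_of_notMem hx]; simp
    refine (mul_le_mul_right (lintegral_mono a2) _).trans ?_
    rw [lintegral_add_right _ (measurable_const.indicator (hTm m)), lintegral_indicator hBm, lintegral_indicator (hTm m),
      setLIntegral_const, lintegral_const_mul' _ _ ENNReal.ofReal_ne_top, mul_add, ← mul_assoc, ← mul_assoc,
      ← ENNReal.ofReal_mul hC0, ← ENNReal.ofReal_mul hC0, ← mul_assoc, ← mul_assoc]
  have hun : closedBall (0 : EuclideanSpace ℝ (Fin n)) R ∩ {x | 0 < x l} = ⋃ m, (closedBall 0 R ∩ {x | 2 * epsm m ≤ x l}) := by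
    ext x
    simp only [Set.mem_inter_iff, Set.mem_iUnion, Set.mem_ofPred_eq]
    constructor
    · rintro ⟨h1, h2⟩
      have : ∀ᶠ m in atTop, 2 * epsm m < x l := 
        (epsm_tendsto.const_mul 2).eventually (gt_mem_nhds (by simpa using h2))
      obtain ⟨m, hm⟩ := this.exists
      exact ⟨m, h1, hm.le⟩
    · rintro ⟨m, h1, h2⟩
      exact ⟨h1, lt_of_lt_of_le (by have := epsm_pos m; positivity) h2⟩
  have hmono : Monotone (fun m => closedBall (0 : EuclideanSpace ℝ (Fin n)) R ∩ {x | 2 * epsm m ≤ x l}) := by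
    intro a b hab x hx
    refine ⟨hx.1, ?_⟩
    have h1 : 2 * epsm a ≤ x l := hx.2
    have := epsm_anti hab
    show 2 * epsm b ≤ x l
    linarith
  rw [hun, setLIntegral_iUnion_of_directed _ hmono.directed_le]
  refine iSup_le fun m => ?_
  have hlim : Tendsto (fun k => ENNReal.ofReal (C * C' * (R⁻¹) ^ 2) * (∫⁻ x in closedBall 0 (2 * R) ∩ {x | 0 < x l}, ENNReal.ofReal (V x)) +
       ENNReal.ofReal (C * C' * (M * (D * 2) ^ 2)) * volume (T k)) atTop (𝓝 (ENNReal.ofReal (C * C' * (R⁻¹) ^ 2) * (∫⁻ x in closedBall 0 (2 * R) ∩ {x | 0 < x l}, ENNReal.ofReal (V x)) +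
       ENNReal.ofReal (C * C' * (M * (D * 2) ^ 2)) * 0)) := by
    refine tendsto_const_nhds.add (ENNReal.Tendsto.const_mul ?_ (Or.inr ENNReal.ofReal_ne_top))
    rw [hT]
    exact slab_tendsto l (2 * R)
  rw [mul_zero, add_zero] at hlim
  rw [hV] at hlim
  refine ge_of_tendsto hlim ?_
  filter_upwards [eventually_ge_atTop m] with k hk
  have := key k
  rw [hF, hV] at this
  refine le_trans ?_ this
  exact lintegral_mono_set (hmono hk)

lemma line_deriv {n : ℕ} (l i0 : Fin n) (hi : i0 ≠ l) (f g : EuclideanSpace ℝ (Fin n) → ℂ)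
    (hf : ContDiffOn ℝ 2 f {x | 0 < x l}) (hg : ∀ x : EuclideanSpace ℝ (Fin n), 0 < x l → pd i0 f x = g x)
    (x : EuclideanSpace ℝ (Fin n)) (hx : 0 < x l) (s : ℝ) :
    HasDerivAt (fun s : ℝ => f (x + s • EuclideanSpace.single i0 1)) (g (x + s • EuclideanSpace.single i0 1)) s := by
  have hU : IsOpen {x : EuclideanSpace ℝ (Fin n) | 0 < x l} := isOpen_lt continuous_const (by fun_prop)
  have hx' : 0 < (x + s • EuclideanSpace.single i0 (1:ℝ)) l := by
    simp [PiLp.single_apply, hi.symm, hx]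
  have h1 : HasFDerivAt f _ (x + s • EuclideanSpace.single i0 (1:ℝ)) :=
    ((hf.differentiableOn (by norm_num)).differentiableAt (hU.mem_nhds hx')).hasFDerivAt
  have h2 : HasDerivAt (fun s : ℝ => x + s • EuclideanSpace.single i0 (1:ℝ)) (EuclideanSpace.single i0 (1:ℝ)) s := by
    have := ((hasDerivAt_id s).smul_const (EuclideanSpace.single i0 (1:ℝ))).const_add x
    simpa using this
  have h3 := h1.comp_hasDerivAt s h2
  rw [← hg _ hx']
  exact h3

lemma line_shift_pos {n : ℕ} (l i0 : Fin n) (hi : i0 ≠ l) 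
    (x : EuclideanSpace ℝ (Fin n)) (hx : 0 < x l) (s : ℝ) : 0 < (x + s • EuclideanSpace.single i0 (1:ℝ)) l := by
  simp [PiLp.single_apply, hi.symm, hx]

lemma line_const {n : ℕ} (l i0 : Fin n) (hi : i0 ≠ l) (f g : EuclideanSpace ℝ (Fin n) → ℂ)
    (hf : ContDiffOn ℝ 2 f {x | 0 < x l}) (hg : ∀ x : EuclideanSpace ℝ (Fin n), 0 < x l → pd i0 f x = g x)
    (hg0 : ∀ x : EuclideanSpace ℝ (Fin n), 0 < x l → g x = 0)
    (x : EuclideanSpace ℝ (Fin n)) (hx : 0 < x l) (s : ℝ) : f (x + s • EuclideanSpace.single i0 1) = f x := by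
  have h := line_deriv l i0 hi f g hf hg x hx
  have h2 := is_const_of_deriv_eq_zero (fun s => (h s).differentiableAt)
    (fun s => by rw [(h s).deriv]; exact hg0 _ (line_shift_pos l i0 hi x hx s)) s 0
  simpa using h2

lemma line_bdd {n : ℕ} (l i0 : Fin n) (hi : i0 ≠ l) (f g h : EuclideanSpace ℝ (Fin n) → ℂ)
    (hf : ContDiffOn ℝ 2 f {x | 0 < x l}) (hfg : ∀ x : EuclideanSpace ℝ (Fin n), 0 < x l → pd i0 f x = g x)
    (hg : ContDiffOn ℝ 2 g {x | 0 < x l}) (hgh : ∀ x : EuclideanSpace ℝ (Fin n), 0 < x l → pd i0 g x = h x)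
    (hh : ∀ x : EuclideanSpace ℝ (Fin n), 0 < x l → h x = 0) (B : ℝ)
    (hB : ∀ x : EuclideanSpace ℝ (Fin n), 0 < x l → ‖f x‖ ≤ B)
    (x : EuclideanSpace ℝ (Fin n)) (hx : 0 < x l) : g x = 0 := by
  have h1 := line_const l i0 hi g h hg hgh hh x hx
  have h2 := line_deriv l i0 hi f g hf hfg x hx
  have h3 : ∀ s : ℝ, f (x + s • EuclideanSpace.single i0 1) - s • g x = f x := fun s => by
    have h4 : ∀ s : ℝ, HasDerivAt (fun s : ℝ => f (x + s • EuclideanSpace.single i0 1) - s • g x) 0 s := fun s => by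
      have := (h2 s).sub ((hasDerivAt_id s).smul_const (g x))
      rw [h1 s, one_smul, sub_self] at this
      exact this
    have := is_const_of_deriv_eq_zero (fun s => (h4 s).differentiableAt) (fun s => (h4 s).deriv) s 0
    simpa using this
  by_contra hne
  have hpos : 0 < ‖g x‖ := norm_pos_iff.mpr hne
  have h5 : ∀ s : ℝ, |s| * ‖g x‖ ≤ 2 * B := fun s => by
    have e : s • g x = f (x + s • EuclideanSpace.single i0 1) - f x := by rw [← h3 s]; abel
    have := norm_sub_le (f (x + s • EuclideanSpace.single i0 1)) (f x)
    rw [← e, norm_smul, Real.norm_eq_abs] at this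
    linarith [hB x hx, hB _ (line_shift_pos l i0 hi x hx s)]
  have h6 := h5 ((2 * B + 1) / ‖g x‖)
  have hB0 : 0 ≤ B := (norm_nonneg _).trans (hB x hx)
  rw [abs_of_nonneg (by positivity), div_mul_cancel₀ _ hpos.ne'] at h6
  linarith

lemma boot {n M : ℕ} (A : Fin n → Fin n → Fin M → Fin M → ℂ) (κ₀ : ℝ) (hκ₀ : 0 < κ₀)
    (hA : ∀ (ξ : Fin n → ℝ) (η : Fin M → ℂ),
    κ₀ * (∑ r, ξ r ^ 2) * (∑ a, ‖η a‖ ^ 2) ≤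
      (∑ r, ∑ s, ∑ a, ∑ b, A r s a b * ξ r * ξ s * (starRingEnd ℂ) (η a) * η b).re) (l i0 : Fin n) (hi : i0 ≠ l)
    (v : ℕ → Fin M → EuclideanSpace ℝ (Fin n) → ℂ) (hv : ∀ k a, ContDiffOn ℝ 2 (v k a) {x | 0 < x l})
    (hL : ∀ k, ∀ x : EuclideanSpace ℝ (Fin n), 0 < x l → ∀ a, ∑ r, ∑ s, ∑ b, A r s a b * pd r (pd s (v k b)) x = 0)
    (hD : ∀ k, ∀ R : ℝ, ∃ D : ℝ, ∀ x : EuclideanSpace ℝ (Fin n), 0 < x l → ‖x‖ ≤ R → ∀ a, ‖v k a x‖ ≤ D * x l)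
    (hB : ∀ k, ∃ B : ℝ, ∀ x : EuclideanSpace ℝ (Fin n), 0 < x l → ∀ a, ‖v k a x‖ ≤ B)
    (hd : ∀ k a, ∀ x : EuclideanSpace ℝ (Fin n), 0 < x l → pd i0 (v k a) x = v (k + 1) a x) :
    ∀ a, ∀ x : EuclideanSpace ℝ (Fin n), 0 < x l → v 1 a x = 0 := by
  have hn : n ≠ 0 := by rintro rfl; exact l.elim0
  obtain ⟨C, hC0, hC⟩ := caccStep A κ₀ hκ₀ hA l
  have hU : IsOpen {x : EuclideanSpace ℝ (Fin n) | 0 < x l} := isOpen_lt continuous_const (by fun_prop)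
  obtain ⟨J, hJ⟩ : ∃ J : ℕ → ℝ → ℝ≥0∞, J = fun k R => ∫⁻ x in closedBall 0 R ∩ {x | 0 < x l}, ENNReal.ofReal (∑ a, ‖v k a x‖ ^ 2) := ⟨_, rfl⟩
  have hms : ∀ R, MeasurableSet (closedBall (0 : EuclideanSpace ℝ (Fin n)) R ∩ {x | 0 < x l}) := fun R =>
    measurableSet_closedBall.inter hU.measurableSet
  have hstep : ∀ k R, 0 < R → J (k + 1) R ≤ ENNReal.ofReal (M * (C * (R⁻¹) ^ 2)) * J k (2 * R) := by
    intro k R hR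
    rw [hJ]
    have e1 : ∀ x, ENNReal.ofReal (∑ a, ‖v (k + 1) a x‖ ^ 2) = ∑ a, ENNReal.ofReal (‖v (k + 1) a x‖ ^ 2) := fun x =>
      ENNReal.ofReal_sum_of_nonneg fun a _ => by positivity
    simp only
    simp_rw [e1]
    rw [lintegral_finsetSum']
    · have : ∀ a, ∫⁻ x in closedBall 0 R ∩ {x | 0 < x l}, ENNReal.ofReal (‖v (k + 1) a x‖ ^ 2) ≤
        ENNReal.ofReal (C * (R⁻¹) ^ 2) * ∫⁻ x in closedBall 0 (2 * R) ∩ {x | 0 < x l}, ENNReal.ofReal (∑ a, ‖v k a x‖ ^ 2) := fun a => by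
        refine le_trans (le_of_eq ?_) (hC (v k) (hv k) (hL k) (hD k) R hR i0 a)
        refine setLIntegral_congr_fun (hms R) (fun x hx => ?_)
        show ENNReal.ofReal (‖v (k + 1) a x‖ ^ 2) = ENNReal.ofReal (‖pd i0 (v k a) x‖ ^ 2)
        rw [hd k a x hx.2]
      have h2 := Finset.sum_le_card_nsmul Finset.univ _ _ (fun a _ => this a)
      refine h2.trans (le_of_eq ?_)
      rw [ENNReal.ofReal_mul (Nat.cast_nonneg M), ENNReal.ofReal_natCast, nsmul_eq_mul, Finset.card_univ, Fintype.card_fin, mul_assoc]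
    · intro a _
      refine ENNReal.measurable_ofReal.comp_aemeasurable (ContinuousOn.aemeasurable ?_ (hms R))
      exact (((hv (k+1) a).continuousOn.norm.pow 2).mono Set.inter_subset_right)
  have hgrow : ∀ k, ∃ c : ℝ, 0 ≤ c ∧ ∀ R, 0 < R → J k R ≤ ENNReal.ofReal (c * (R ^ n * (R⁻¹) ^ (2 * k))) := by
    intro k
    induction k with
    | zero =>
      obtain ⟨B, hB⟩ := hB 0
      refine ⟨M * B ^ 2 * (volume (ball (0 : EuclideanSpace ℝ (Fin n)) 1)).toReal, by positivity, fun R hR => ?_⟩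
      have : J 0 R ≤ ∫⁻ x in closedBall (0 : EuclideanSpace ℝ (Fin n)) R ∩ {x | 0 < x l}, ENNReal.ofReal (M * B ^ 2) := by
        rw [hJ]
        refine setLIntegral_mono' (hms R) fun x hx => ENNReal.ofReal_le_ofReal ?_
        have h2 := Finset.sum_le_card_nsmul Finset.univ (fun a => ‖v 0 a x‖ ^ 2) (B ^ 2) 
          (fun a _ => pow_le_pow_left₀ (norm_nonneg _) (hB x hx.2 a) 2)
        simpa using h2
      refine this.trans ?_
      rw [setLIntegral_const]
      have h3 : volume (closedBall (0 : EuclideanSpace ℝ (Fin n)) R ∩ {x | 0 < x l}) ≤ volume (closedBall (0 : EuclideanSpace ℝ (Fin n)) R) :=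
        measure_mono Set.inter_subset_left
      rw [Measure.addHaar_closedBall _ _ hR.le] at h3
      refine (mul_le_mul_right h3 _).trans (le_of_eq ?_)
      rw [mul_assoc (M * B ^ 2 : ℝ), ENNReal.ofReal_mul (show (0:ℝ) ≤ M * B ^ 2 by positivity), ENNReal.ofReal_mul ENNReal.toReal_nonneg, ENNReal.ofReal_toReal measure_ball_lt_top.ne]
      simp only [finrank_euclideanSpace_fin, mul_zero, pow_zero, mul_one]
      rw [mul_comm (ENNReal.ofReal (R ^ n))]
    | succ k ih =>
      obtain ⟨c, hc, ih⟩ := ih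
      refine ⟨M * C * c * (2 ^ n * (2⁻¹) ^ (2 * k)), by positivity, fun R hR => (hstep k R hR).trans ?_⟩
      refine (mul_le_mul_right (ih (2 * R) (by positivity)) _).trans (le_of_eq ?_)
      rw [← ENNReal.ofReal_mul (by positivity)]
      congr 1
      rw [mul_inv, mul_pow, mul_pow, mul_add, pow_add]
      ring
  have hJn : ∀ R, J n R = 0 := by
    intro R
    obtain ⟨c, hc, hg⟩ := hgrow n
    have hle : ∀ S, 0 < S → R ≤ S → J n R ≤ ENNReal.ofReal (c * (S⁻¹) ^ n) := fun S hS hRS => by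
      have h1 : J n R ≤ J n S := by
        rw [hJ]
        exact lintegral_mono_set (Set.inter_subset_inter_left _ (closedBall_subset_closedBall hRS))
      refine (h1.trans (hg S hS)).trans (le_of_eq ?_)
      congr 2
      rw [two_mul, pow_add, ← mul_assoc, ← mul_pow, mul_inv_cancel₀ hS.ne']; simp
    have ht : Tendsto (fun S : ℝ => ENNReal.ofReal (c * (S⁻¹) ^ n)) atTop (𝓝 0) := by
      have : Tendsto (fun S : ℝ => c * (S⁻¹) ^ n) atTop (𝓝 (c * 0 ^ n)) := (tendsto_inv_atTop_zero.pow n).const_mul c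
      rw [zero_pow hn, mul_zero] at this
      simpa using ENNReal.tendsto_ofReal this
    refine le_antisymm (ge_of_tendsto ht ?_) zero_le
    filter_upwards [eventually_gt_atTop 0, eventually_ge_atTop R] with S h1 h2
    exact hle S h1 h2
  have hvn : ∀ a, ∀ x : EuclideanSpace ℝ (Fin n), 0 < x l → v n a x = 0 := by
    intro a x hx
    have hVc : ContinuousOn (fun x => ∑ a, ‖v n a x‖ ^ 2) {x : EuclideanSpace ℝ (Fin n) | 0 < x l} :=
      continuousOn_finsetSum _ fun a _ => (hv n a).continuousOn.norm.pow 2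
    have hW : IsOpen (ball (0 : EuclideanSpace ℝ (Fin n)) (‖x‖ + 1) ∩ {x | 0 < x l}) := isOpen_ball.inter hU
    have h0 : ∫⁻ x in ball 0 (‖x‖ + 1) ∩ {x | 0 < x l}, ENNReal.ofReal (∑ a, ‖v n a x‖ ^ 2) = 0 := by
      refine le_antisymm ?_ zero_le
      have := hJn (‖x‖ + 1)
      rw [hJ] at this
      rw [← this]
      exact lintegral_mono_set (Set.inter_subset_inter_left _ ball_subset_closedBall)
    have h0' := (lintegral_eq_zero_iff' (ENNReal.measurable_ofReal.comp_aemeasurable ((hVc.mono Set.inter_subset_right).aemeasurable hW.measurableSet))).mp h0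
    have h1 : (fun x => ∑ a, ‖v n a x‖ ^ 2) =ᵐ[volume.restrict (ball 0 (‖x‖ + 1) ∩ {x | 0 < x l})] fun _ => 0 := by
      filter_upwards [h0'] with y hy
      have : ∑ a, ‖v n a y‖ ^ 2 ≤ 0 := ENNReal.ofReal_eq_zero.mp hy
      exact le_antisymm this (by positivity)
    have h2 := Measure.eqOn_open_of_ae_eq h1 hW (hVc.mono Set.inter_subset_right) continuousOn_const
      (show x ∈ ball 0 (‖x‖ + 1) ∩ {x | 0 < x l} from ⟨by simp, hx⟩)
    have h3 := (Finset.sum_eq_zero_iff_of_nonneg (fun a _ => by positivity)).mp h2 a (Finset.mem_univ a)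
    simpa using h3
  have hdown : ∀ k, (∀ a, ∀ x : EuclideanSpace ℝ (Fin n), 0 < x l → v (k + 2) a x = 0) →
      (∀ a, ∀ x : EuclideanSpace ℝ (Fin n), 0 < x l → v (k + 1) a x = 0) := by
    intro k hk a x hx
    obtain ⟨B, hB⟩ := hB k
    exact line_bdd l i0 hi (v k a) (v (k+1) a) (v (k+2) a) (hv k a) (hd k a) (hv (k+1) a) (hd (k+1) a) (hk a) B (fun x hx => hB x hx a) x hx
  have hfin : ∀ k, (∀ a, ∀ x : EuclideanSpace ℝ (Fin n), 0 < x l → v (k + 1) a x = 0) → (∀ a, ∀ x : EuclideanSpace ℝ (Fin n), 0 < x l → v 1 a x = 0) := by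
    intro k
    induction k with
    | zero => exact fun h => h
    | succ k ih => exact fun h => ih (hdown k h)
  obtain ⟨m, rfl⟩ := Nat.exists_eq_succ_of_ne_zero hn
  exact hfin m hvn

lemma vline_pos {n : ℕ} (l : Fin n) (x : EuclideanSpace ℝ (Fin n)) (s : ℝ) :
    (x + (s - x l) • EuclideanSpace.single l (1:ℝ)) l = s := by
  simp [PiLp.single_apply]

lemma vline_deriv {n : ℕ} (l : Fin n) (f : EuclideanSpace ℝ (Fin n) → ℂ)
    (hf : ContDiffOn ℝ 1 f {x | 0 < x l}) (x : EuclideanSpace ℝ (Fin n)) (s : ℝ) (hs : 0 < s) :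
    HasDerivAt (fun s : ℝ => f (x + (s - x l) • EuclideanSpace.single l 1)) (pd l f (x + (s - x l) • EuclideanSpace.single l 1)) s := by
  have hU : IsOpen {x : EuclideanSpace ℝ (Fin n) | 0 < x l} := isOpen_lt continuous_const (by fun_prop)
  have hx' : 0 < (x + (s - x l) • EuclideanSpace.single l (1:ℝ)) l := by rw [vline_pos]; exact hs
  have h1 : HasFDerivAt f _ (x + (s - x l) • EuclideanSpace.single l (1:ℝ)) :=
    ((hf.differentiableOn (by norm_num)).differentiableAt (hU.mem_nhds hx')).hasFDerivAt
  have h2 : HasDerivAt (fun s : ℝ => x + (s - x l) • EuclideanSpace.single l (1:ℝ)) (EuclideanSpace.single l (1:ℝ)) s := by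
    have := ((((hasDerivAt_id s).sub_const (x l))).smul_const (EuclideanSpace.single l (1:ℝ))).const_add x
    simpa using this
  exact h1.comp_hasDerivAt s h2

lemma pd_symm {n : ℕ} {U : Set (EuclideanSpace ℝ (Fin n))} (hU : IsOpen U) (r s : Fin n)
    {f : EuclideanSpace ℝ (Fin n) → ℂ} (hf : ContDiffOn ℝ 2 f U) (x : EuclideanSpace ℝ (Fin n)) (hx : x ∈ U) :
    pd r (pd s f) x = pd s (pd r f) x := by
  have h1 : ContDiffAt ℝ 2 f x := hf.contDiffAt (hU.mem_nhds hx)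
  have h2 := h1.isSymmSndFDerivAt (by simp)
  have h3 : DifferentiableAt ℝ (fderiv ℝ f) x := (h1.fderiv_right (m := 1) (by norm_num)).differentiableAt (by norm_num)
  have e : ∀ r s, pd r (pd s f) x = fderiv ℝ (fderiv ℝ f) x (EuclideanSpace.single r 1) (EuclideanSpace.single s 1) := fun r s => by
    show fderiv ℝ (fun y => fderiv ℝ f y (EuclideanSpace.single s 1)) x _ = _
    rw [fderiv_clm_apply h3 (differentiableAt_const _)]
    simp
  rw [e, e]
  exact h2.eq _ _

lemma ell_bound {M : ℕ} (B : Fin M → Fin M → ℂ) (κ₀ K : ℝ) (hκ₀ : 0 < κ₀) (hK : 0 ≤ K)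
    (g : Fin M → ℂ) (hB : κ₀ * ∑ a, ‖g a‖ ^ 2 ≤ (∑ a, ∑ b, B a b * (starRingEnd ℂ) (g a) * g b).re)
    (hg : ∀ a, ‖∑ b, B a b * g b‖ ≤ K) (c : Fin M) : ‖g c‖ ≤ M * K / κ₀ := by
  obtain ⟨S, hS⟩ : ∃ S, S = ∑ a, ‖g a‖ ^ 2 := ⟨_, rfl⟩
  have hS0 : 0 ≤ S := by rw [hS]; positivity
  have h1 : ∀ a, ‖g a‖ ≤ √S := fun a => by
    apply Real.le_sqrt_of_sq_le
    rw [hS]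
    exact Finset.single_le_sum (f := fun a => ‖g a‖ ^ 2) (fun _ _ => by positivity) (Finset.mem_univ a)
  have h2 : (∑ a, ∑ b, B a b * (starRingEnd ℂ) (g a) * g b).re ≤ ∑ a : Fin M, √S * K := by
    refine (Complex.re_le_norm _).trans ?_
    refine norm_sum_le_of_le _ fun a _ => ?_
    have : ∑ b, B a b * (starRingEnd ℂ) (g a) * g b = (starRingEnd ℂ) (g a) * ∑ b, B a b * g b := by
      rw [Finset.mul_sum]
      exact Finset.sum_congr rfl fun b _ => by ring
    rw [this, norm_mul, RCLike.norm_conj]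
    exact mul_le_mul (h1 a) (hg a) (norm_nonneg _) (Real.sqrt_nonneg _)
  rw [← hS] at hB
  simp only [Finset.sum_const, Finset.card_univ, Fintype.card_fin, nsmul_eq_mul] at h2
  have h3 : κ₀ * S ≤ M * (√S * K) := hB.trans h2
  refine (h1 c).trans ?_
  rw [le_div_iff₀ hκ₀]
  by_cases hz : √S = 0
  · rw [hz]; simp; positivity
  · have hp : 0 < √S := lt_of_le_of_ne (Real.sqrt_nonneg _) (Ne.symm hz)
    have h4 : S = √S * √S := (Real.mul_self_sqrt hS0).symm
    have h5 : √S * (√S * κ₀) ≤ √S * (M * K) := by nlinarith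
    exact le_of_mul_le_mul_left h5 hp

lemma sum_split {n : ℕ} (l : Fin n) (f : Fin n → Fin n → ℂ) :
    ∑ r, ∑ s, f r s = f l l + ∑ r ∈ Finset.univ.erase l, (f r l + f l r) + ∑ r ∈ Finset.univ.erase l, ∑ s ∈ Finset.univ.erase l, f r s := by
  rw [← Finset.add_sum_erase Finset.univ (fun r => ∑ s, f r s) (Finset.mem_univ l)]
  have : ∀ r, ∑ s, f r s = f r l + ∑ s ∈ Finset.univ.erase l, f r s := fun r => by
    rw [← Finset.add_sum_erase Finset.univ (fun s => f r s) (Finset.mem_univ l)]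
  simp_rw [this, Finset.sum_add_distrib]
  ring

lemma pd_H {n M : ℕ} (A : Fin n → Fin n → Fin M → Fin M → ℂ) (l : Fin n)
    (v : Fin M → EuclideanSpace ℝ (Fin n) → ℂ) (hv : ∀ a, ContDiffOn ℝ 2 (v a) {x | 0 < x l})
    (a : Fin M) (x : EuclideanSpace ℝ (Fin n)) (hx : 0 < x l) :
    pd l (fun x => ∑ b, (A l l a b * pd l (v b) x + ∑ r ∈ Finset.univ.erase l, (A r l a b + A l r a b) * pd r (v b) x)) x
     = ∑ b, (A l l a b * pd l (pd l (v b)) x + ∑ r ∈ Finset.univ.erase l, (A r l a b + A l r a b) * pd l (pd r (v b)) x) := by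
  have hU : IsOpen {x : EuclideanSpace ℝ (Fin n) | 0 < x l} := isOpen_lt continuous_const (by fun_prop)
  have hd : ∀ r b, DifferentiableAt ℝ (pd r (v b)) x := fun r b =>
    ((pd_contDiffOn r hU (hv b)).differentiableOn (by norm_num)).differentiableAt (hU.mem_nhds hx)
  have h : HasFDerivAt (fun x => ∑ b, (A l l a b * pd l (v b) x + ∑ r ∈ Finset.univ.erase l, (A r l a b + A l r a b) * pd r (v b) x))
     (∑ b, (A l l a b • fderiv ℝ (pd l (v b)) x + ∑ r ∈ Finset.univ.erase l, (A r l a b + A l r a b) • fderiv ℝ (pd r (v b)) x)) x := by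
    refine HasFDerivAt.fun_sum fun b _ => HasFDerivAt.add ?_ (HasFDerivAt.fun_sum fun r _ => ?_)
    · exact (hd l b).hasFDerivAt.const_mul _
    · exact (hd r b).hasFDerivAt.const_mul _
  conv_lhs => rw [pd]
  rw [h.fderiv]
  simp [ContinuousLinearMap.sum_apply, pd]

lemma linear_decay {n M : ℕ} (A : Fin n → Fin n → Fin M → Fin M → ℂ) (κ₀ : ℝ) (hκ₀ : 0 < κ₀)
    (hA : ∀ (ξ : Fin n → ℝ) (η : Fin M → ℂ),
    κ₀ * (∑ r, ξ r ^ 2) * (∑ a, ‖η a‖ ^ 2) ≤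
      (∑ r, ∑ s, ∑ a, ∑ b, A r s a b * ξ r * ξ s * (starRingEnd ℂ) (η a) * η b).re) (l : Fin n)
    (v : Fin M → EuclideanSpace ℝ (Fin n) → ℂ) (hv : ∀ a, ContDiffOn ℝ 2 (v a) {x | 0 < x l})
    (hL : ∀ x : EuclideanSpace ℝ (Fin n), 0 < x l → ∀ a, ∑ r, ∑ s, ∑ b, A r s a b * pd r (pd s (v b)) x = 0)
    (B : ℝ) (hB0 : ∀ x : EuclideanSpace ℝ (Fin n), 0 < x l → ∀ a, ‖v a x‖ ≤ B)
    (hB1 : ∀ x : EuclideanSpace ℝ (Fin n), 0 < x l → ∀ a r, r ≠ l → ‖pd r (v a) x‖ ≤ B)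
    (hB2 : ∀ x : EuclideanSpace ℝ (Fin n), 0 < x l → ∀ a r s, r ≠ l → s ≠ l → ‖pd r (pd s (v a)) x‖ ≤ B)
    (hlim : ∀ x : EuclideanSpace ℝ (Fin n), ∀ a, Tendsto (fun s : ℝ => v a (x + (s - x l) • EuclideanSpace.single l 1)) (𝓝[>] 0) (𝓝 0))
    (R : ℝ) : ∃ D : ℝ, ∀ x : EuclideanSpace ℝ (Fin n), 0 < x l → ‖x‖ ≤ R → ∀ a, ‖v a x‖ ≤ D * x l := by
  have hU : IsOpen {x : EuclideanSpace ℝ (Fin n) | 0 < x l} := isOpen_lt continuous_const (by fun_prop)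
  obtain ⟨Λ, hΛ⟩ : ∃ q : ℝ, q = ∑ r, ∑ s, ∑ a, ∑ b, ‖A r s a b‖ := ⟨_, rfl⟩
  have hΛ0 : 0 ≤ Λ := by rw [hΛ]; positivity
  obtain ⟨H, hH⟩ : ∃ H : Fin M → EuclideanSpace ℝ (Fin n) → ℂ, H = fun a x => ∑ b, (A l l a b * pd l (v b) x + ∑ r ∈ Finset.univ.erase l, (A r l a b + A l r a b) * pd r (v b) x) := ⟨_, rfl⟩
  have hHC : ∀ a, ContDiffOn ℝ 1 (H a) {x | 0 < x l} := fun a => by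
    rw [hH]
    refine ContDiffOn.sum fun b _ => ContDiffOn.add (contDiffOn_const.mul (pd_contDiffOn l hU (hv b))) (ContDiffOn.sum fun r _ => contDiffOn_const.mul (pd_contDiffOn r hU (hv b)))
  -- derivative bound
  obtain ⟨K1, hK1⟩ : ∃ K1, ∀ x : EuclideanSpace ℝ (Fin n), 0 < x l → ∀ a, ‖pd l (H a) x‖ ≤ K1 := by
    refine ⟨∑ a : Fin M, ∑ b : Fin M, ∑ r : Fin n, ∑ s : Fin n, ‖A r s a b‖ * |B|, fun x hx a => ?_⟩
    have e : pd l (H a) x = - ∑ b, ∑ r ∈ Finset.univ.erase l, ∑ s ∈ Finset.univ.erase l, A r s a b * pd r (pd s (v b)) x := by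
      rw [eq_neg_iff_add_eq_zero, ← hL x hx a, hH]
      simp only
      rw [pd_H A l v hv a x hx, ← Finset.sum_add_distrib]
      have : ∑ r, ∑ s, ∑ b, A r s a b * pd r (pd s (v b)) x = ∑ b, ∑ r, ∑ s, A r s a b * pd r (pd s (v b)) x := by
        simp_rw [Finset.sum_comm (s := Finset.univ (α := Fin n)) (t := Finset.univ (α := Fin M))]
      rw [this]
      refine Finset.sum_congr rfl fun b _ => ?_
      rw [sum_split l]
      congr 2
      refine Finset.sum_congr rfl fun r _ => ?_
      rw [pd_symm hU r l (hv b) x hx]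
      ring
    rw [e, norm_neg]
    have h1 : ‖∑ b, ∑ r ∈ Finset.univ.erase l, ∑ s ∈ Finset.univ.erase l, A r s a b * pd r (pd s (v b)) x‖ ≤ ∑ b : Fin M, ∑ r ∈ Finset.univ.erase l, ∑ s ∈ Finset.univ.erase l, ‖A r s a b‖ * |B| := by
      refine norm_sum_le_of_le _ fun b _ => norm_sum_le_of_le _ fun r hr => norm_sum_le_of_le _ fun s hs => ?_
      rw [norm_mul]
      refine mul_le_mul_of_nonneg_left ((hB2 x hx b r s (Finset.ne_of_mem_erase hr) (Finset.ne_of_mem_erase hs)).trans (le_abs_self _)) (norm_nonneg _)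
    refine h1.trans ?_
    have h2 : ∑ b : Fin M, ∑ r ∈ Finset.univ.erase l, ∑ s ∈ Finset.univ.erase l, ‖A r s a b‖ * |B| ≤ ∑ b : Fin M, ∑ r : Fin n, ∑ s : Fin n, ‖A r s a b‖ * |B| := by
      refine Finset.sum_le_sum fun b _ => ?_
      refine (Finset.sum_le_sum_of_subset_of_nonneg (Finset.erase_subset _ _) (fun _ _ _ => Finset.sum_nonneg fun _ _ => by positivity)).trans ?_
      refine Finset.sum_le_sum fun r _ => Finset.sum_le_sum_of_subset_of_nonneg (Finset.erase_subset _ _) (fun _ _ _ => by positivity)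
    refine h2.trans ?_
    exact Finset.single_le_sum (f := fun a => ∑ b : Fin M, ∑ r : Fin n, ∑ s : Fin n, ‖A r s a b‖ * |B|) (fun _ _ => by positivity) (Finset.mem_univ a)
  -- bound at height one
  obtain ⟨K2, hK2⟩ : ∃ K2, ∀ x : EuclideanSpace ℝ (Fin n), x l = 1 → ‖x‖ ≤ R + 2 → ∀ a, ‖H a x‖ ≤ K2 := by
    have hcpt : IsCompact (closedBall (0 : EuclideanSpace ℝ (Fin n)) (R + 2) ∩ {x | x l = 1}) :=
      (isCompact_closedBall _ _).inter_right (isClosed_eq (by fun_prop) continuous_const)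
    have : ∀ a, ∃ c, ∀ x ∈ closedBall (0 : EuclideanSpace ℝ (Fin n)) (R + 2) ∩ {x | x l = 1}, ‖H a x‖ ≤ c := fun a =>
      hcpt.exists_bound_of_continuousOn ((hHC a).continuousOn.mono (fun x hx => by
        have : x l = 1 := hx.2
        show 0 < x l
        rw [this]; exact one_pos))
    choose c hc using this
    refine ⟨∑ a, |c a|, fun x h1 h2 a => ?_⟩
    refine ((hc a x ⟨by simpa using h2, h1⟩).trans (le_abs_self _)).trans ?_
    exact Finset.single_le_sum (f := fun a => |c a|) (fun _ _ => by positivity) (Finset.mem_univ a)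
  obtain ⟨K3, hK3⟩ : ∃ K3 : ℝ, 0 ≤ K3 ∧ ∀ x : EuclideanSpace ℝ (Fin n), 0 < x l → x l ≤ 1 → ‖x‖ ≤ R + 1 → ∀ a, ‖pd l (v a) x‖ ≤ K3 := by
    obtain ⟨Q, hQ⟩ : ∃ Q : ℝ, Q = ∑ a : Fin M, ∑ b : Fin M, ∑ r : Fin n, ‖A r l a b + A l r a b‖ * |B| := ⟨_, rfl⟩
    have hQ0 : 0 ≤ Q := by rw [hQ]; positivity
    refine ⟨M * (|K2| + |K1| + Q) / κ₀, by positivity, fun x hx hx1 hxR a => ?_⟩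
    refine ell_bound (A l l) κ₀ (|K2| + |K1| + Q) hκ₀ (by positivity) (fun b => pd l (v b) x) ?_ ?_ a
    · have := hA (fun r => if r = l then 1 else 0) (fun b => pd l (v b) x)
      have e1 : ∑ r, ∑ s, ∑ a, ∑ b, A r s a b * (((if r = l then (1:ℝ) else 0) : ℝ) : ℂ) * (((if s = l then (1:ℝ) else 0) : ℝ) : ℂ) * (starRingEnd ℂ) (pd l (v a) x) * pd l (v b) x
          = ∑ a, ∑ b, A l l a b * (starRingEnd ℂ) (pd l (v a) x) * pd l (v b) x := by
        rw [Finset.sum_eq_single l (fun r _ hr => by simp [hr]) (by simp)]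
        rw [Finset.sum_eq_single l (fun r _ hr => by simp [hr]) (by simp)]
        simp
      rw [e1] at this
      simpa only [ite_pow, one_pow, ne_eq, OfNat.ofNat_ne_zero, not_false_eq_true, zero_pow, Finset.sum_ite_eq', Finset.mem_univ, if_true, mul_one] using this
    · intro a
      have h1 : ‖H a x‖ ≤ |K2| + |K1| := by
        have h2 := Convex.norm_image_sub_le_of_norm_hasDerivWithin_le (s := Set.Ioi (0:ℝ)) 
          (fun s hs => (vline_deriv l (H a) (hHC a) x s hs).hasDerivWithinAt)
          (fun s hs => hK1 _ (by rw [vline_pos]; exact hs) a) (convex_Ioi 0) (Set.mem_Ioi.mpr one_pos) (Set.mem_Ioi.mpr hx)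
        simp only [sub_self, zero_smul, add_zero] at h2
        have h3 : ‖H a (x + (1 - x l) • EuclideanSpace.single l 1)‖ ≤ K2 := by
          refine hK2 _ (vline_pos l x 1) ?_ a
          refine (norm_add_le _ _).trans ?_
          rw [norm_smul]
          simp only [EuclideanSpace.norm_single, norm_one, mul_one]
          have : ‖1 - x l‖ ≤ 1 := by
            rw [Real.norm_eq_abs, abs_le]; constructor <;> linarith
          linarith [norm_nonneg x]
        have h4 : ‖x l - 1‖ ≤ 1 := by
          rw [Real.norm_eq_abs, abs_le]; constructor <;> linarith
        have h5 : ‖H a x‖ ≤ ‖H a x - H a (x + (1 - x l) • EuclideanSpace.single l 1)‖ + ‖H a (x + (1 - x l) • EuclideanSpace.single l 1)‖ := by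
          have := norm_add_le (H a x - H a (x + (1 - x l) • EuclideanSpace.single l 1)) (H a (x + (1 - x l) • EuclideanSpace.single l 1))
          rwa [sub_add_cancel] at this
        have h6 : K1 * ‖x l - 1‖ ≤ |K1| * 1 := mul_le_mul (le_abs_self _) h4 (norm_nonneg _) (abs_nonneg _)
        linarith [le_abs_self K2]
      have e : ∑ b, A l l a b * pd l (v b) x = H a x - ∑ b, ∑ r ∈ Finset.univ.erase l, (A r l a b + A l r a b) * pd r (v b) x := by
        rw [hH]; simp [Finset.sum_add_distrib]
      rw [e]
      refine (norm_sub_le _ _).trans (add_le_add h1 ?_)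
      have h2 : ‖∑ b, ∑ r ∈ Finset.univ.erase l, (A r l a b + A l r a b) * pd r (v b) x‖ ≤ ∑ b : Fin M, ∑ r ∈ Finset.univ.erase l, ‖A r l a b + A l r a b‖ * |B| := by
        refine norm_sum_le_of_le _ fun b _ => norm_sum_le_of_le _ fun r hr => ?_
        rw [norm_mul]
        exact mul_le_mul_of_nonneg_left ((hB1 x hx b r (Finset.ne_of_mem_erase hr)).trans (le_abs_self _)) (norm_nonneg _)
      refine h2.trans ?_
      have h3 : ∑ b : Fin M, ∑ r ∈ Finset.univ.erase l, ‖A r l a b + A l r a b‖ * |B| ≤ ∑ b : Fin M, ∑ r : Fin n, ‖A r l a b + A l r a b‖ * |B| :=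
        Finset.sum_le_sum fun b _ => Finset.sum_le_sum_of_subset_of_nonneg (Finset.erase_subset _ _) (fun _ _ _ => by positivity)
      refine h3.trans ?_
      rw [hQ]
      exact Finset.single_le_sum (f := fun a => ∑ b : Fin M, ∑ r : Fin n, ‖A r l a b + A l r a b‖ * |B|) (fun _ _ => by positivity) (Finset.mem_univ a)
  refine ⟨K3 + |B|, fun x hx hxR a => ?_⟩
  by_cases hx1 : x l ≤ 1
  · have h1 : ∀ s ∈ Set.Ioc 0 (x l), ‖v a x - v a (x + (s - x l) • EuclideanSpace.single l 1)‖ ≤ K3 * x l := by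
      intro s hs
      have h2 := Convex.norm_image_sub_le_of_norm_hasDerivWithin_le (s := Set.Ioc (0:ℝ) (x l)) (C := K3)
          (fun s hs => (vline_deriv l (v a) ((hv a).of_le (by norm_num)) x s hs.1).hasDerivWithinAt)
          (fun s hs => hK3.2 _ (by rw [vline_pos]; exact hs.1) (by rw [vline_pos]; exact hs.2.trans hx1) (by
            refine (norm_add_le _ _).trans ?_
            rw [norm_smul]
            simp only [EuclideanSpace.norm_single, norm_one, mul_one]
            have h3 := hs.1
            have h4 := hs.2
            have : ‖s - x l‖ ≤ 1 := by
              rw [Real.norm_eq_abs, abs_le]; constructor <;> linarith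
            linarith) a) (convex_Ioc 0 (x l)) hs (Set.mem_Ioc.mpr ⟨hx, le_refl _⟩)
      simp only [sub_self, zero_smul, add_zero] at h2
      refine h2.trans (mul_le_mul_of_nonneg_left ?_ hK3.1)
      have h3 := hs.1
      have h4 := hs.2
      rw [Real.norm_eq_abs, abs_le]; constructor <;> linarith
    have h2 : Tendsto (fun s : ℝ => ‖v a x - v a (x + (s - x l) • EuclideanSpace.single l 1)‖) (𝓝[>] 0) (𝓝 ‖v a x - 0‖) :=
      (tendsto_const_nhds.sub (hlim x a)).norm
    rw [sub_zero] at h2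
    have h3 : ‖v a x‖ ≤ K3 * x l := le_of_tendsto h2 (by
      filter_upwards [Ioc_mem_nhdsGT hx] with s hs using h1 s hs)
    have h4 : 0 ≤ |B| * x l := by positivity
    linarith
  · push Not at hx1
    have h1 := hB0 x hx a
    have h2 : 0 ≤ K3 * x l := mul_nonneg hK3.1 hx.le
    have h3 : |B| * 1 ≤ |B| * x l := mul_le_mul_of_nonneg_left hx1.le (abs_nonneg _)
    linarith [le_abs_self B]

def Cv {m n : ℕ} {F : Type*} [NormedAddCommGroup F] [NormedSpace ℝ F]
    (ι : EuclideanSpace ℝ (Fin m) →L[ℝ] EuclideanSpace ℝ (Fin n))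
    (φ : EuclideanSpace ℝ (Fin m) → ℝ) (f : EuclideanSpace ℝ (Fin n) → F) (x : EuclideanSpace ℝ (Fin n)) : F :=
  ∫ y, φ y • f (x - ι y)

section CvSec
variable {m n : ℕ} {F : Type*} [NormedAddCommGroup F] [NormedSpace ℝ F]
    (ι : EuclideanSpace ℝ (Fin m) →L[ℝ] EuclideanSpace ℝ (Fin n)) (l : Fin n)

lemma Cv_mem (hι : ∀ y, (ι y) l = 0) (x : EuclideanSpace ℝ (Fin n)) (hx : 0 < x l) (y : EuclideanSpace ℝ (Fin m)) :
    x - ι y ∈ {x : EuclideanSpace ℝ (Fin n) | 0 < x l} := by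
  show 0 < (x - ι y) l
  simp [hι, hx]

lemma Cv_cont_y (hι : ∀ y, (ι y) l = 0) (f : EuclideanSpace ℝ (Fin n) → F) (hf : ContinuousOn f {x | 0 < x l})
    (x : EuclideanSpace ℝ (Fin n)) (hx : 0 < x l) : Continuous (fun y => f (x - ι y)) :=
  hf.comp_continuous (by fun_prop) (Cv_mem ι l hι x hx)

lemma Cv_int (hι : ∀ y, (ι y) l = 0) (φ : EuclideanSpace ℝ (Fin m) → ℝ) (hφ : Continuous φ) (hc : HasCompactSupport φ)
    (f : EuclideanSpace ℝ (Fin n) → F) (hf : ContinuousOn f {x | 0 < x l})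
    (x : EuclideanSpace ℝ (Fin n)) (hx : 0 < x l) : Integrable (fun y => φ y • f (x - ι y)) :=
  (hφ.smul (Cv_cont_y ι l hι f hf x hx)).integrable_of_hasCompactSupport hc.smul_right

lemma Cv_contOn (hι : ∀ y, (ι y) l = 0) (φ : EuclideanSpace ℝ (Fin m) → ℝ) (hφ : Continuous φ) (hc : HasCompactSupport φ)
    (f : EuclideanSpace ℝ (Fin n) → F) (hf : ContinuousOn f {x | 0 < x l}) :
    ContinuousOn (Cv ι φ f) {x | 0 < x l} := by
  refine continuousOn_integral_of_compact_support (k := tsupport φ) hc ?_ ?_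
  · refine ContinuousOn.smul (by fun_prop) (hf.comp (by fun_prop) ?_)
    rintro ⟨x, y⟩ ⟨hx, _⟩
    exact Cv_mem ι l hι x hx y
  · intro x y _ hy
    simp [image_eq_zero_of_notMem_tsupport hy]

lemma Cv_hasFDerivAt (hι : ∀ y, (ι y) l = 0) (φ : EuclideanSpace ℝ (Fin m) → ℝ) (hφ : Continuous φ) (hc : HasCompactSupport φ)
    (f : EuclideanSpace ℝ (Fin n) → F) (hf : ContDiffOn ℝ 1 f {x | 0 < x l})
    (x : EuclideanSpace ℝ (Fin n)) (hx : 0 < x l) :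
    HasFDerivAt (Cv ι φ f) (Cv ι φ (fderiv ℝ f) x) x := by
  have hU : IsOpen {x : EuclideanSpace ℝ (Fin n) | 0 < x l} := isOpen_lt continuous_const (by fun_prop)
  have hf' : ContinuousOn (fderiv ℝ f) {x | 0 < x l} := hf.continuousOn_fderiv_of_isOpen hU le_rfl
  obtain ⟨δ, hδ, hδU⟩ := Metric.nhds_basis_closedBall.mem_iff.1 (hU.mem_nhds hx)
  obtain ⟨C, hC⟩ : ∃ C, ∀ q ∈ closedBall x δ ×ˢ tsupport φ, ‖fderiv ℝ f (q.1 - ι q.2)‖ ≤ C := by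
    refine ((isCompact_closedBall x δ).prod hc).exists_bound_of_continuousOn (f := fun q => fderiv ℝ f (q.1 - ι q.2)) ?_
    refine hf'.comp (by fun_prop) ?_
    rintro ⟨z, y⟩ ⟨hz, _⟩
    exact Cv_mem ι l hι z (hδU hz) y
  refine hasFDerivAt_integral_of_dominated_of_fderiv_le (s := closedBall x δ) (bound := fun y => ‖φ y‖ * C)
    (F' := fun z y => φ y • fderiv ℝ f (z - ι y)) (closedBall_mem_nhds x hδ) ?_ ?_ ?_ ?_ ?_ ?_
  · filter_upwards [hU.mem_nhds hx] with z hz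
    exact (Cv_int ι l hι φ hφ hc f hf.continuousOn z hz).aestronglyMeasurable
  · exact Cv_int ι l hι φ hφ hc f hf.continuousOn x hx
  · exact (Cv_int ι l hι φ hφ hc _ hf' x hx).aestronglyMeasurable
  · refine Eventually.of_forall fun y z hz => ?_
    rw [norm_smul]
    by_cases hy : y ∈ tsupport φ
    · exact mul_le_mul_of_nonneg_left (hC (z, y) ⟨hz, hy⟩) (norm_nonneg _)
    · simp [image_eq_zero_of_notMem_tsupport hy]
  · exact ((hφ.norm).integrable_of_hasCompactSupport hc.norm).mul_const C
  · refine Eventually.of_forall fun y z hz => ?_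
    have h1 : HasFDerivAt f (fderiv ℝ f (z - ι y)) (z - ι y) :=
      ((hf.differentiableOn one_ne_zero).differentiableAt (hU.mem_nhds (Cv_mem ι l hι z (hδU hz) y))).hasFDerivAt
    have h2 : HasFDerivAt (fun z => z - ι y) (ContinuousLinearMap.id ℝ _) z := (hasFDerivAt_id z).sub_const _
    have := (h1.comp z h2).const_smul (φ y)
    rw [ContinuousLinearMap.comp_id] at this
    exact this

lemma Cv_contDiff1 (hι : ∀ y, (ι y) l = 0) (φ : EuclideanSpace ℝ (Fin m) → ℝ) (hφ : Continuous φ) (hc : HasCompactSupport φ)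
    (f : EuclideanSpace ℝ (Fin n) → F) (hf : ContDiffOn ℝ 1 f {x | 0 < x l}) :
    ContDiffOn ℝ 1 (Cv ι φ f) {x | 0 < x l} := by
  have hU : IsOpen {x : EuclideanSpace ℝ (Fin n) | 0 < x l} := isOpen_lt continuous_const (by fun_prop)
  have hf' : ContinuousOn (fderiv ℝ f) {x | 0 < x l} := hf.continuousOn_fderiv_of_isOpen hU le_rfl
  rw [show (1 : WithTop ℕ∞) = 0 + 1 by norm_num, contDiffOn_succ_iff_fderiv_of_isOpen hU]
  refine ⟨fun x hx => (Cv_hasFDerivAt ι l hι φ hφ hc f hf x hx).differentiableAt.differentiableWithinAt, by simp, ?_⟩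
  rw [contDiffOn_zero]
  exact (Cv_contOn ι l hι φ hφ hc _ hf').congr fun x hx => (Cv_hasFDerivAt ι l hι φ hφ hc f hf x hx).fderiv

lemma Cv_contDiff2 (hι : ∀ y, (ι y) l = 0) (φ : EuclideanSpace ℝ (Fin m) → ℝ) (hφ : Continuous φ) (hc : HasCompactSupport φ)
    (f : EuclideanSpace ℝ (Fin n) → F) (hf : ContDiffOn ℝ 2 f {x | 0 < x l}) :
    ContDiffOn ℝ 2 (Cv ι φ f) {x | 0 < x l} := by
  have hU : IsOpen {x : EuclideanSpace ℝ (Fin n) | 0 < x l} := isOpen_lt continuous_const (by fun_prop)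
  have hf1 : ContDiffOn ℝ 1 f {x | 0 < x l} := hf.of_le (by norm_num)
  have hf' : ContDiffOn ℝ 1 (fderiv ℝ f) {x | 0 < x l} := hf.fderiv_of_isOpen hU (by norm_num)
  rw [show (2 : WithTop ℕ∞) = 1 + 1 by norm_num, contDiffOn_succ_iff_fderiv_of_isOpen hU]
  refine ⟨fun x hx => (Cv_hasFDerivAt ι l hι φ hφ hc f hf1 x hx).differentiableAt.differentiableWithinAt, by simp, ?_⟩
  exact (Cv_contDiff1 ι l hι φ hφ hc _ hf').congr fun x hx => (Cv_hasFDerivAt ι l hι φ hφ hc f hf1 x hx).fderiv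

lemma Cv_pd (hι : ∀ y, (ι y) l = 0) [CompleteSpace F] (φ : EuclideanSpace ℝ (Fin m) → ℝ) (hφ : Continuous φ) (hc : HasCompactSupport φ)
    (f : EuclideanSpace ℝ (Fin n) → F) (hf : ContDiffOn ℝ 1 f {x | 0 < x l}) (r : Fin n)
    (x : EuclideanSpace ℝ (Fin n)) (hx : 0 < x l) :
    pd r (Cv ι φ f) x = Cv ι φ (pd r f) x := by
  have hU : IsOpen {x : EuclideanSpace ℝ (Fin n) | 0 < x l} := isOpen_lt continuous_const (by fun_prop)
  have hf' : ContinuousOn (fderiv ℝ f) {x | 0 < x l} := hf.continuousOn_fderiv_of_isOpen hU le_rfl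
  rw [pd, (Cv_hasFDerivAt ι l hι φ hφ hc f hf x hx).fderiv, Cv, Cv,
    ContinuousLinearMap.integral_apply (Cv_int ι l hι φ hφ hc _ hf' x hx)]
  rfl

lemma pd_congr_open {U : Set (EuclideanSpace ℝ (Fin n))} (hU : IsOpen U) {f g : EuclideanSpace ℝ (Fin n) → F}
    (h : ∀ x ∈ U, f x = g x) (r : Fin n) (x) (hx : x ∈ U) : pd r f x = pd r g x := by
  rw [pd, pd, Filter.EventuallyEq.fderiv_eq]
  filter_upwards [hU.mem_nhds hx] with z hz using h z hz

lemma Cv_pd2 (hι : ∀ y, (ι y) l = 0) (φ : EuclideanSpace ℝ (Fin m) → ℝ) (hφ : Continuous φ) (hc : HasCompactSupport φ)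
    (f : EuclideanSpace ℝ (Fin n) → ℂ) (hf : ContDiffOn ℝ 2 f {x | 0 < x l}) (r s : Fin n)
    (x : EuclideanSpace ℝ (Fin n)) (hx : 0 < x l) :
    pd r (pd s (Cv ι φ f)) x = Cv ι φ (pd r (pd s f)) x := by
  have hU : IsOpen {x : EuclideanSpace ℝ (Fin n) | 0 < x l} := isOpen_lt continuous_const (by fun_prop)
  rw [pd_congr_open hU (fun z hz => Cv_pd ι l hι φ hφ hc f (hf.of_le (by norm_num)) s z hz) r x hx]
  exact Cv_pd ι l hι φ hφ hc _ (pd_contDiffOn s hU hf) r x hx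

lemma Cv_ibp (hι : ∀ y, (ι y) l = 0) [CompleteSpace F] (φ : EuclideanSpace ℝ (Fin m) → ℝ) (hφ : ContDiff ℝ 1 φ) (hc : HasCompactSupport φ)
    (f : EuclideanSpace ℝ (Fin n) → F) (hf : ContDiffOn ℝ 1 f {x | 0 < x l}) (i : Fin m) (r : Fin n)
    (hr : ι (EuclideanSpace.single i 1) = EuclideanSpace.single r 1)
    (x : EuclideanSpace ℝ (Fin n)) (hx : 0 < x l) :
    Cv ι φ (pd r f) x = Cv ι (pd i φ) f x := by
  have hU : IsOpen {x : EuclideanSpace ℝ (Fin n) | 0 < x l} := isOpen_lt continuous_const (by fun_prop)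
  have hf' : ContinuousOn (fderiv ℝ f) {x | 0 < x l} := hf.continuousOn_fderiv_of_isOpen hU le_rfl
  have hpf : ContinuousOn (pd r f) {x | 0 < x l} := pd_contOn r hU hf
  have hd : ∀ y, HasFDerivAt (fun y => f (x - ι y)) ((fderiv ℝ f (x - ι y)).comp (-ι)) y := fun y => by
    have h1 : HasFDerivAt f (fderiv ℝ f (x - ι y)) (x - ι y) :=
      ((hf.differentiableOn one_ne_zero).differentiableAt (hU.mem_nhds (Cv_mem ι l hι x hx y))).hasFDerivAt
    exact h1.comp y (ι.hasFDerivAt.const_sub x)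
  have e : ∀ y, fderiv ℝ (fun y => f (x - ι y)) y (EuclideanSpace.single i 1) = - pd r f (x - ι y) := fun y => by
    rw [(hd y).fderiv]
    simp [hr, pd]
  have := integral_smul_fderiv_eq_neg_fderiv_smul_of_integrable (μ := (volume : Measure (EuclideanSpace ℝ (Fin m)))) (f := φ) (g := fun y => f (x - ι y)) (v := EuclideanSpace.single i 1)
    (Cv_int ι l hι (pd i φ) (pd_cont i hφ) (pd_compact i hc) f hf.continuousOn x hx)
    (by
      simp_rw [e, smul_neg]
      exact (Cv_int ι l hι φ hφ.continuous hc _ hpf x hx).neg)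
    (Cv_int ι l hι φ hφ.continuous hc f hf.continuousOn x hx)
    (fun y _ => (hφ.differentiable one_ne_zero) y) (fun y _ => (hd y).differentiableAt)
  simp_rw [e, smul_neg, integral_neg] at this
  exact neg_injective this
end CvSec

lemma toUp_apply {n : ℕ} (y : EuclideanSpace ℝ (Fin (n - 1))) (t : ℝ) (i : Fin n) :
    toUp y t i = if h : (i : ℕ) < n - 1 then y ⟨i, h⟩ else t := rfl

def iotaL (n : ℕ) : EuclideanSpace ℝ (Fin (n - 1)) →L[ℝ] EuclideanSpace ℝ (Fin n) :=
  LinearMap.toContinuousLinearMap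
    { toFun := fun y => toUp y 0
      map_add' := fun x y => by
        ext i
        simp only [toUp_apply, PiLp.add_apply]
        split_ifs <;> simp
      map_smul' := fun c y => by
        ext i
        simp only [toUp_apply, PiLp.smul_apply, RingHom.id_apply]
        split_ifs <;> simp }

lemma iotaL_apply {n : ℕ} (y : EuclideanSpace ℝ (Fin (n - 1))) : iotaL n y = toUp y 0 := rfl

lemma iotaL_last {n : ℕ} (h : 0 < n) (y : EuclideanSpace ℝ (Fin (n - 1))) : (iotaL n y) (lastIdx n h) = 0 := by
  rw [iotaL_apply, toUp_apply]
  simp [lastIdx]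

lemma iotaL_single {n : ℕ} (i : Fin (n - 1)) : iotaL n (EuclideanSpace.single i 1) = EuclideanSpace.single (finUp i) 1 := by
  ext j
  rw [iotaL_apply, toUp_apply]
  simp only [PiLp.single_apply, finUp, Fin.ext_iff]
  split_ifs <;> first | rfl | omega

lemma toUp_sub_iotaL {n : ℕ} (x y : EuclideanSpace ℝ (Fin (n - 1))) (t : ℝ) : toUp x t - iotaL n y = toUp (x - y) t := by
  ext j
  simp only [iotaL_apply, toUp_apply, PiLp.sub_apply]
  split_ifs <;> simp

lemma toUp_last {n : ℕ} (h : 0 < n) (x : EuclideanSpace ℝ (Fin (n - 1))) (t : ℝ) : toUp x t (lastIdx n h) = t := by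
  rw [toUp_apply]
  simp [lastIdx]

lemma toUp_surj {n : ℕ} (h : 0 < n) (x : EuclideanSpace ℝ (Fin n)) : toUp (xinit x) (x (lastIdx n h)) = x := by
  ext j
  rw [toUp_apply]
  split_ifs with hj
  · rfl
  · have hj' : lastIdx n h = j := by
      simp only [lastIdx, Fin.ext_iff]
      omega
    rw [hj']

lemma toUp_add_last {n : ℕ} (h : 0 < n) (x : EuclideanSpace ℝ (Fin n)) (s : ℝ) :
    x + (s - x (lastIdx n h)) • EuclideanSpace.single (lastIdx n h) 1 = toUp (xinit x) s := by
  ext j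
  rw [toUp_apply]
  simp only [PiLp.add_apply, PiLp.smul_apply, PiLp.single_apply, smul_eq_mul]
  split_ifs with h1 h2 h2
  · exfalso; rw [h1] at h2; simp [lastIdx] at h2
  · rw [h1]; ring
  · simp [xinit]
  · exfalso; apply h1; simp only [lastIdx, Fin.ext_iff]; omega

lemma toUp_add_finUp {n : ℕ} (x : EuclideanSpace ℝ (Fin (n - 1))) (t s : ℝ) (i : Fin (n - 1)) :
    toUp x t + s • EuclideanSpace.single (finUp i) 1 = toUp (x + s • EuclideanSpace.single i 1) t := by
  rw [← iotaL_single, ← map_smul]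
  ext j
  simp only [iotaL_apply, toUp_apply, PiLp.add_apply]
  split_ifs <;> simp

lemma ntMax_measurable {n : ℕ} {F : Type*} [NormedAddCommGroup F] (κ : ℝ)
    (u : EuclideanSpace ℝ (Fin n) → F) : Measurable (ntMax κ u) := by
  refine measurable_of_Ioi fun a => IsOpen.measurableSet ?_
  have : ntMax κ u ⁻¹' Set.Ioi a = ⋃ (y' : EuclideanSpace ℝ (Fin (n - 1))) (t : ℝ) (_ : 0 < t ∧ a < (‖u (toUp y' t)‖₊ : ℝ≥0∞)), {x' | dist x' y' < κ * t} := by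
    ext x'
    simp only [Set.mem_preimage, Set.mem_Ioi, ntMax, lt_iSup_iff, Set.mem_iUnion, Set.mem_ofPred_eq, exists_prop]
    constructor
    · rintro ⟨y, t, ⟨h1, h2⟩, h3⟩; exact ⟨y, t, ⟨h1, h3⟩, h2⟩
    · rintro ⟨y, t, ⟨h1, h2⟩, h3⟩; exact ⟨y, t, ⟨h1, h3⟩, h2⟩
  rw [this]
  exact isOpen_iUnion fun y => isOpen_iUnion fun t => isOpen_iUnion fun _ => isOpen_lt (by fun_prop) (by fun_prop)

lemma le_ntMax {n : ℕ} {F : Type*} [NormedAddCommGroup F] (κ : ℝ) (hκ : 0 < κ)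
    (u : EuclideanSpace ℝ (Fin n) → F) (y : EuclideanSpace ℝ (Fin (n - 1))) (t : ℝ) (ht : 0 < t) :
    ‖u (toUp y t)‖ₑ ≤ ntMax κ u y :=
  le_iSup_of_le y (le_iSup_of_le t (le_iSup_of_le ⟨ht, by rw [dist_self]; positivity⟩ le_rfl))

lemma young_c (p : ℝ) (hp : 1 < p) (c : ℝ≥0∞) (hc : c ≠ 0) (hc' : c ≠ ∞) :
    ∃ K : ℝ≥0∞, K ≠ ∞ ∧ ∀ N : ℝ≥0∞, N ≤ c + K * N ^ p := by
  have hcp : c ^ p ≠ 0 := by simp [hc, hc']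
  refine ⟨c / c ^ p, ENNReal.div_ne_top hc' hcp, fun N => ?_⟩
  by_cases h : N ≤ c
  · exact h.trans le_self_add
  · push Not at h
    refine le_trans ?_ le_add_self
    have h1 : 1 ≤ N / c := by
      rw [ENNReal.le_div_iff_mul_le (Or.inl hc) (Or.inl hc')]; simpa using h.le
    have h2 : N / c ≤ (N / c) ^ p := by
      simpa using ENNReal.rpow_le_rpow_of_exponent_le h1 hp.le
    rw [ENNReal.div_rpow_of_nonneg _ _ (by linarith)] at h2
    calc N = c * (N / c) := (ENNReal.mul_div_cancel hc hc').symm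
      _ ≤ c * (N ^ p / c ^ p) := by gcongr
      _ = _ := by simp only [div_eq_mul_inv]; ring

section bounds
variable {n : ℕ} (N : EuclideanSpace ℝ (Fin (n - 1)) → ℝ≥0∞)
    (f : EuclideanSpace ℝ (Fin n) → ℂ)
    (φ : EuclideanSpace ℝ (Fin (n - 1)) → ℝ)

lemma Cv_enorm (hfN : ∀ y t, 0 < t → ‖f (toUp y t)‖ₑ ≤ N y)
    (x : EuclideanSpace ℝ (Fin (n - 1))) (t : ℝ) (ht : 0 < t) :
    ‖Cv (iotaL n) φ f (toUp x t)‖ₑ ≤ ∫⁻ y, ‖φ y‖ₑ * N (x - y) := by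
  refine (enorm_integral_le_lintegral_enorm _).trans (lintegral_mono fun y => ?_)
  rw [enorm_smul, toUp_sub_iotaL]
  exact mul_le_mul_right (hfN _ _ ht) _

lemma phi_enorm_fin (hφ : Continuous φ) (hc : HasCompactSupport φ) : ∫⁻ y, ‖φ y‖ₑ < ∞ :=
  (hφ.integrable_of_hasCompactSupport hc).2

lemma phi_bdd (hφ : Continuous φ) (hc : HasCompactSupport φ) : ∃ S : ℝ≥0∞, S ≠ ∞ ∧ ∀ y, ‖φ y‖ₑ ≤ S := by
  obtain ⟨C, hC⟩ := hc.exists_bound_of_continuous hφ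
  refine ⟨ENNReal.ofReal C, ENNReal.ofReal_ne_top, fun y => ?_⟩
  rw [← ofReal_norm_eq_enorm]
  exact ENNReal.ofReal_le_ofReal (hC y)

lemma int_split (hφ : Continuous φ) (hNm : Measurable N) (p : ℝ) (c K : ℝ≥0∞) (hK : ∀ N : ℝ≥0∞, N ≤ c + K * N ^ p)
    (x : EuclideanSpace ℝ (Fin (n - 1))) :
    ∫⁻ y, ‖φ y‖ₑ * N (x - y) ≤ c * (∫⁻ y, ‖φ y‖ₑ) + K * ∫⁻ z, ‖φ (x - z)‖ₑ * N z ^ p := by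
  have hφm : Measurable (fun y => ‖φ y‖ₑ) := hφ.measurable.enorm
  have e : ∫⁻ z, ‖φ (x - z)‖ₑ * N z ^ p = ∫⁻ y, ‖φ y‖ₑ * N (x - y) ^ p := by
    rw [← lintegral_sub_left_eq_self (fun z => ‖φ (x - z)‖ₑ * N z ^ p) x]
    simp
  rw [e, ← lintegral_const_mul _ hφm, ← lintegral_const_mul _ (by fun_prop), ← lintegral_add_left (by fun_prop)]
  refine lintegral_mono fun y => ?_
  refine (mul_le_mul_right (hK _) _).trans (le_of_eq ?_)
  ring

lemma tail_fin (S : ℝ≥0∞) (hS : ∀ y, ‖φ y‖ₑ ≤ S) (hNm : Measurable N) (p : ℝ) 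
    (x : EuclideanSpace ℝ (Fin (n - 1))) :
    ∫⁻ z, ‖φ (x - z)‖ₑ * N z ^ p ≤ S * ∫⁻ z, N z ^ p := by
  rw [← lintegral_const_mul _ (by fun_prop)]
  exact lintegral_mono fun z => by gcongr; exact hS _

lemma Nphi_bdd (hφ : Continuous φ) (hc : HasCompactSupport φ) (hNm : Measurable N) (p : ℝ) (hp : 1 < p)
    (hN : ∫⁻ z, N z ^ p < ∞) : ∃ B : ℝ≥0∞, B ≠ ∞ ∧ ∀ x, ∫⁻ y, ‖φ y‖ₑ * N (x - y) ≤ B := by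
  obtain ⟨K, hK, hK'⟩ := young_c p hp 1 one_ne_zero ENNReal.one_ne_top
  obtain ⟨S, hS, hS'⟩ := phi_bdd φ hφ hc
  refine ⟨1 * (∫⁻ y, ‖φ y‖ₑ) + K * (S * ∫⁻ z, N z ^ p), ?_, fun x => ?_⟩
  · have := phi_enorm_fin φ hφ hc
    refine ENNReal.add_ne_top.2 ⟨by rw [one_mul]; exact this.ne, ENNReal.mul_ne_top hK (ENNReal.mul_ne_top hS hN.ne)⟩
  · refine (int_split N φ hφ hNm p 1 K hK' x).trans ?_
    gcongr
    exact tail_fin N φ S hS' hNm p x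

lemma Cv_bdd (hφ : Continuous φ) (hc : HasCompactSupport φ) (hNm : Measurable N) (p : ℝ) (hp : 1 < p)
    (hN : ∫⁻ z, N z ^ p < ∞) (hfN : ∀ y t, 0 < t → ‖f (toUp y t)‖ₑ ≤ N y) :
    ∃ B : ℝ, ∀ x t, 0 < t → ‖Cv (iotaL n) φ f (toUp x t)‖ ≤ B := by
  obtain ⟨B, hB, h⟩ := Nphi_bdd N φ hφ hc hNm p hp hN
  refine ⟨B.toReal, fun x t ht => ?_⟩
  rw [← toReal_enorm]
  exact ENNReal.toReal_mono hB ((Cv_enorm N f φ hfN x t ht).trans (h x))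

lemma Cv_lim (hφ : Continuous φ) (hc : HasCompactSupport φ) (hNm : Measurable N) (p : ℝ) (hp : 1 < p)
    (hn : 0 < n) (hf : ContinuousOn f {x | 0 < x (lastIdx n hn)})
    (hN : ∫⁻ z, N z ^ p < ∞) (hfN : ∀ y t, 0 < t → ‖f (toUp y t)‖ₑ ≤ N y)
    (hlim : ∀ᵐ z, Tendsto (fun s : ℝ => f (toUp z s)) (𝓝[>] 0) (𝓝 0)) (x : EuclideanSpace ℝ (Fin (n - 1))) :
    Tendsto (fun s : ℝ => Cv (iotaL n) φ f (toUp x s)) (𝓝[>] 0) (𝓝 0) := by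
  obtain ⟨B, hB, h⟩ := Nphi_bdd N φ hφ hc hNm p hp hN
  have hfin : ∀ᵐ z, N z < ∞ := by
    filter_upwards [ae_lt_top (by fun_prop) hN.ne] with z hz
    by_contra hcon
    rw [not_lt, top_le_iff] at hcon
    rw [hcon, ENNReal.top_rpow_of_pos (by linarith)] at hz
    exact lt_irrefl _ hz
  have hq := (Measure.measurePreserving_sub_left (volume : Measure (EuclideanSpace ℝ (Fin (n - 1)))) x).quasiMeasurePreserving
  have hfin' : ∀ᵐ y, N (x - y) < ∞ := hq.ae hfin
  have hlim' : ∀ᵐ y, Tendsto (fun s : ℝ => f (toUp (x - y) s)) (𝓝[>] 0) (𝓝 0) := hq.ae hlim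
  have hNt : Measurable (fun y => (N (x - y)).toReal) := by fun_prop
  have hφm := hφ.measurable
  have e : (0 : ℂ) = ∫ y : EuclideanSpace ℝ (Fin (n - 1)), (0 : ℂ) := by simp
  rw [e]
  refine tendsto_integral_filter_of_dominated_convergence (fun y => ‖φ y‖ * (N (x - y)).toReal) ?_ ?_ ?_ ?_
  · filter_upwards [self_mem_nhdsWithin] with s hs
    exact (Cv_int (iotaL n) (lastIdx n hn) (iotaL_last hn) φ hφ hc f hf _ (by rw [toUp_last]; exact hs)).aestronglyMeasurable
  · filter_upwards [self_mem_nhdsWithin] with s hs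
    filter_upwards [hfin'] with y hy
    rw [norm_smul, toUp_sub_iotaL]
    refine mul_le_mul_of_nonneg_left ?_ (norm_nonneg _)
    rw [← toReal_enorm]
    exact ENNReal.toReal_mono hy.ne (hfN _ _ hs)
  · refine ⟨(hφm.norm.mul hNt).aestronglyMeasurable, ?_⟩
    refine lt_of_le_of_lt (lintegral_mono (g := fun y => ‖φ y‖ₑ * N (x - y)) fun y => ?_) (lt_of_le_of_lt (h x) hB.lt_top)
    simp only [enorm_mul, enorm_norm]
    refine mul_le_mul_right ?_ _
    rw [Real.enorm_eq_ofReal ENNReal.toReal_nonneg]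
    exact ENNReal.ofReal_toReal_le
  · filter_upwards [hlim'] with y hy
    simp_rw [toUp_sub_iotaL]
    simpa using hy.const_smul (φ y)

lemma Cv_zero_of_const (hφ : Continuous φ) (hc : HasCompactSupport φ) (hNm : Measurable N) (p : ℝ) (hp : 1 < p)
    (hN : ∫⁻ z, N z ^ p < ∞) (hfN : ∀ y t, 0 < t → ‖f (toUp y t)‖ₑ ≤ N y) (i : Fin (n - 1))
    (x : EuclideanSpace ℝ (Fin (n - 1))) (t : ℝ) (ht : 0 < t)
    (hconst : ∀ s : ℝ, Cv (iotaL n) φ f (toUp x t + s • EuclideanSpace.single (finUp i) 1) = Cv (iotaL n) φ f (toUp x t)) :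
    Cv (iotaL n) φ f (toUp x t) = 0 := by
  obtain ⟨S, hS, hS'⟩ := phi_bdd φ hφ hc
  have hφm := hφ.measurable
  have htail : Tendsto (fun k : ℕ => ∫⁻ z, ‖φ (x + (k : ℝ) • EuclideanSpace.single i 1 - z)‖ₑ * N z ^ p) atTop (𝓝 0) := by
    have e : (0 : ℝ≥0∞) = ∫⁻ y : EuclideanSpace ℝ (Fin (n - 1)), (0 : ℝ≥0∞) := by simp
    rw [e]
    refine tendsto_lintegral_of_dominated_convergence (fun z => S * N z ^ p) (fun k => by fun_prop) (fun k => ?_) ?_ ?_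
    · exact Eventually.of_forall fun z => by dsimp only; gcongr; exact hS' _
    · rw [lintegral_const_mul _ (by fun_prop)]
      exact ENNReal.mul_ne_top hS hN.ne
    · refine Eventually.of_forall fun z => ?_
      obtain ⟨R, hR⟩ := hc.isBounded.subset_closedBall (0 : EuclideanSpace ℝ (Fin (n - 1)))
      refine tendsto_const_nhds.congr' ?_
      obtain ⟨k0, hk0⟩ := exists_nat_gt (R + ‖x - z‖)
      filter_upwards [eventually_ge_atTop k0] with k hk
      have : x + (k : ℝ) • EuclideanSpace.single i (1:ℝ) - z ∉ tsupport φ := by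
        intro hmem
        have h1 := hR hmem
        rw [mem_closedBall_zero_iff] at h1
        have h2 : ‖(k : ℝ) • EuclideanSpace.single i (1:ℝ)‖ = k := by
          rw [norm_smul]; simp
        have h3 : ‖(k : ℝ) • EuclideanSpace.single i (1:ℝ)‖ ≤ ‖x + (k : ℝ) • EuclideanSpace.single i (1:ℝ) - z‖ + ‖x - z‖ := by
          have := norm_sub_le (x + (k : ℝ) • EuclideanSpace.single i (1:ℝ) - z) (x - z)
          rwa [show x + (k : ℝ) • EuclideanSpace.single i (1:ℝ) - z - (x - z) = (k : ℝ) • EuclideanSpace.single i (1:ℝ) by abel] at this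
        have h4 : (k0 : ℝ) ≤ k := by exact_mod_cast hk
        linarith
      rw [image_eq_zero_of_notMem_tsupport this]
      simp
  have key : ∀ c : ℝ≥0∞, c ≠ 0 → c ≠ ∞ → ‖Cv (iotaL n) φ f (toUp x t)‖ₑ ≤ c * ∫⁻ y, ‖φ y‖ₑ := by
    intro c hc0 hc1
    obtain ⟨K, hK, hK'⟩ := young_c p hp c hc0 hc1
    have h1 : ∀ k : ℕ, ‖Cv (iotaL n) φ f (toUp x t)‖ₑ ≤ c * (∫⁻ y, ‖φ y‖ₑ) + K * ∫⁻ z, ‖φ (x + (k : ℝ) • EuclideanSpace.single i 1 - z)‖ₑ * N z ^ p := by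
      intro k
      rw [← hconst k, toUp_add_finUp]
      exact (Cv_enorm N f φ hfN _ t ht).trans (int_split N φ hφ hNm p c K hK' _)
    have h2 : Tendsto (fun k : ℕ => c * (∫⁻ y, ‖φ y‖ₑ) + K * ∫⁻ z, ‖φ (x + (k : ℝ) • EuclideanSpace.single i 1 - z)‖ₑ * N z ^ p) atTop (𝓝 (c * (∫⁻ y, ‖φ y‖ₑ) + K * 0)) :=
      tendsto_const_nhds.add (ENNReal.Tendsto.const_mul htail (Or.inr hK))
    rw [mul_zero, add_zero] at h2
    exact ge_of_tendsto' h2 h1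
  have hI := phi_enorm_fin φ hφ hc
  rw [← enorm_eq_zero, ← nonpos_iff_eq_zero]
  have h3 : Tendsto (fun k : ℕ => ((k : ℝ≥0∞) + 1)⁻¹ * ∫⁻ y, ‖φ y‖ₑ) atTop (𝓝 (0 * ∫⁻ y, ‖φ y‖ₑ)) := by
    refine ENNReal.Tendsto.mul_const ?_ (Or.inr hI.ne)
    have := (tendsto_add_atTop_iff_nat 1).2 ENNReal.tendsto_inv_nat_nhds_zero
    simpa using this
  rw [zero_mul] at h3
  refine ge_of_tendsto' h3 fun k => key _ ?_ ?_
  · simp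
  · simp
end bounds

lemma pd_smooth {m : ℕ} (i : Fin m) {φ : EuclideanSpace ℝ (Fin m) → ℝ} (hφ : ContDiff ℝ (⊤ : ℕ∞) φ) :
    ContDiff ℝ (⊤ : ℕ∞) (pd i φ) :=
  (hφ.fderiv_right (m := (⊤ : ℕ∞)) (by simp)).clm_apply contDiff_const

lemma fin_bd {T X : Type*} [Fintype T] (P : X → Prop) (g : T → X → ℝ) (h : ∀ t, ∃ B, ∀ x, P x → g t x ≤ B) :
    ∃ B, ∀ t x, P x → g t x ≤ B := by
  choose B hB using h
  refine ⟨∑ t, |B t|, fun t x hx => ((hB t x hx).trans (le_abs_self _)).trans ?_⟩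
  exact Finset.single_le_sum (f := fun t => |B t|) (fun _ _ => abs_nonneg _) (Finset.mem_univ t)

lemma ne_last {n : ℕ} (h : 0 < n) (r : Fin n) (hr : r ≠ lastIdx n h) : ∃ i : Fin (n - 1), finUp i = r := by
  refine ⟨⟨r, ?_⟩, rfl⟩
  have : (r : ℕ) ≠ n - 1 := fun hh => hr (Fin.ext hh)
  omega

section fin
variable {n M : ℕ} (hn : 0 < n) (f : Fin M → EuclideanSpace ℝ (Fin n) → ℂ)
    (hf : ∀ a, ContDiffOn ℝ 2 (f a) {x | 0 < x (lastIdx n hn)})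

lemma Cv_pdh (g : EuclideanSpace ℝ (Fin n) → ℂ) (hg : ContDiffOn ℝ 2 g {x | 0 < x (lastIdx n hn)}) (i : Fin (n - 1)) (φ : EuclideanSpace ℝ (Fin (n - 1)) → ℝ) (hφ : ContDiff ℝ (⊤ : ℕ∞) φ) (hc : HasCompactSupport φ)
    (x : EuclideanSpace ℝ (Fin n)) (hx : 0 < x (lastIdx n hn)) :
    pd (finUp i) (Cv (iotaL n) φ g) x = Cv (iotaL n) (pd i φ) g x := by
  have hg1 : ContDiffOn ℝ 1 g {x | 0 < x (lastIdx n hn)} := hg.of_le (by norm_num)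
  rw [Cv_pd (iotaL n) (lastIdx n hn) (iotaL_last hn) φ hφ.continuous hc g hg1 _ x hx]
  exact Cv_ibp (iotaL n) (lastIdx n hn) (iotaL_last hn) φ (hφ.of_le (by exact_mod_cast le_top)) hc g hg1 i _ (iotaL_single i) x hx

lemma Cv_pdh2 (g : EuclideanSpace ℝ (Fin n) → ℂ) (hg : ContDiffOn ℝ 2 g {x | 0 < x (lastIdx n hn)}) (i j : Fin (n - 1)) (φ : EuclideanSpace ℝ (Fin (n - 1)) → ℝ) (hφ : ContDiff ℝ (⊤ : ℕ∞) φ) (hc : HasCompactSupport φ)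
    (x : EuclideanSpace ℝ (Fin n)) (hx : 0 < x (lastIdx n hn)) :
    pd (finUp j) (pd (finUp i) (Cv (iotaL n) φ g)) x = Cv (iotaL n) (pd j (pd i φ)) g x := by
  have hU : IsOpen {x : EuclideanSpace ℝ (Fin n) | 0 < x (lastIdx n hn)} := isOpen_lt continuous_const (by fun_prop)
  rw [pd_congr_open hU (fun z hz => Cv_pdh hn g hg i φ hφ hc z hz) _ x hx]
  exact Cv_pdh hn g hg j _ (pd_smooth i hφ) (pd_compact i hc) x hx

lemma Cv_sys (A : Fin n → Fin n → Fin M → Fin M → ℂ) (hf : ∀ a, ContDiffOn ℝ 2 (f a) {x | 0 < x (lastIdx n hn)})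
    (hL : ∀ x : EuclideanSpace ℝ (Fin n), 0 < x (lastIdx n hn) → ∀ a, ∑ r, ∑ s, ∑ b, A r s a b * pd r (pd s (f b)) x = 0)
    (φ : EuclideanSpace ℝ (Fin (n - 1)) → ℝ) (hφ : Continuous φ) (hc : HasCompactSupport φ)
    (x : EuclideanSpace ℝ (Fin n)) (hx : 0 < x (lastIdx n hn)) (a : Fin M) :
    ∑ r, ∑ s, ∑ b, A r s a b * pd r (pd s (Cv (iotaL n) φ (f b))) x = 0 := by
  have hU : IsOpen {x : EuclideanSpace ℝ (Fin n) | 0 < x (lastIdx n hn)} := isOpen_lt continuous_const (by fun_prop)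
  have hint : ∀ r s b, Integrable (fun y => A r s a b * (φ y • pd r (pd s (f b)) (x - iotaL n y))) := fun r s b =>
    (Cv_int (iotaL n) (lastIdx n hn) (iotaL_last hn) φ hφ hc _ (pd_contOn r hU (pd_contDiffOn s hU (hf b))) x hx).const_mul _
  have e : ∀ r s b, A r s a b * pd r (pd s (Cv (iotaL n) φ (f b))) x = ∫ y, A r s a b * (φ y • pd r (pd s (f b)) (x - iotaL n y)) := fun r s b => by
    rw [Cv_pd2 (iotaL n) (lastIdx n hn) (iotaL_last hn) φ hφ hc _ (hf b) r s x hx, integral_const_mul]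
    rfl
  simp_rw [e]
  have e2 : ∀ r s, ∑ b, ∫ y, A r s a b * (φ y • pd r (pd s (f b)) (x - iotaL n y)) = ∫ y, ∑ b, A r s a b * (φ y • pd r (pd s (f b)) (x - iotaL n y)) := fun r s =>
    (integral_finsetSum _ fun b _ => hint r s b).symm
  simp_rw [e2]
  have e3 : ∀ r, ∑ s, ∫ y, ∑ b, A r s a b * (φ y • pd r (pd s (f b)) (x - iotaL n y)) = ∫ y, ∑ s, ∑ b, A r s a b * (φ y • pd r (pd s (f b)) (x - iotaL n y)) := fun r =>
    (integral_finsetSum _ fun s _ => integrable_finsetSum _ fun b _ => hint r s b).symm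
  simp_rw [e3]
  rw [← integral_finsetSum _ fun r _ => integrable_finsetSum _ fun s _ => integrable_finsetSum _ fun b _ => hint r s b]
  have e4 : ∀ y, ∑ r, ∑ s, ∑ b, A r s a b * (φ y • pd r (pd s (f b)) (x - iotaL n y)) = 0 := fun y => by
    have := hL (x - iotaL n y) (Cv_mem (iotaL n) (lastIdx n hn) (iotaL_last hn) x hx y) a
    have h2 : ∑ r, ∑ s, ∑ b, A r s a b * (φ y • pd r (pd s (f b)) (x - iotaL n y)) = φ y • ∑ r, ∑ s, ∑ b, A r s a b * pd r (pd s (f b)) (x - iotaL n y) := by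
      simp_rw [Finset.smul_sum, mul_smul_comm]
    rw [h2, this, smul_zero]
  simp_rw [e4]
  simp

lemma Cv_core (hn2 : 2 ≤ n) (A : Fin n → Fin n → Fin M → Fin M → ℂ) (κ₀ : ℝ) (hκ₀ : 0 < κ₀)
    (hA : ∀ (ξ : Fin n → ℝ) (η : Fin M → ℂ),
    κ₀ * (∑ r, ξ r ^ 2) * (∑ a, ‖η a‖ ^ 2) ≤
      (∑ r, ∑ s, ∑ a, ∑ b, A r s a b * ξ r * ξ s * (starRingEnd ℂ) (η a) * η b).re)
    (hf : ∀ a, ContDiffOn ℝ 2 (f a) {x | 0 < x (lastIdx n hn)})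
    (hL : ∀ x : EuclideanSpace ℝ (Fin n), 0 < x (lastIdx n hn) → ∀ a, ∑ r, ∑ s, ∑ b, A r s a b * pd r (pd s (f b)) x = 0)
    (N : EuclideanSpace ℝ (Fin (n - 1)) → ℝ≥0∞) (hNm : Measurable N) (p : ℝ) (hp : 1 < p)
    (hN : ∫⁻ z, N z ^ p < ∞) (hfN : ∀ a y t, 0 < t → ‖f a (toUp y t)‖ₑ ≤ N y)
    (hlim : ∀ a, ∀ᵐ z, Tendsto (fun s : ℝ => f a (toUp z s)) (𝓝[>] 0) (𝓝 0))
    (φ : EuclideanSpace ℝ (Fin (n - 1)) → ℝ) (hφ : ContDiff ℝ (⊤ : ℕ∞) φ) (hc : HasCompactSupport φ)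
    (a : Fin M) (x : EuclideanSpace ℝ (Fin n)) (hx : 0 < x (lastIdx n hn)) :
    Cv (iotaL n) φ (f a) x = 0 := by
  have hl := iotaL_last hn
  have bd : ∀ (ψ : EuclideanSpace ℝ (Fin (n - 1)) → ℝ), ContDiff ℝ (⊤ : ℕ∞) ψ → HasCompactSupport ψ → ∀ a,
      ∃ B : ℝ, ∀ x : EuclideanSpace ℝ (Fin n), 0 < x (lastIdx n hn) → ‖Cv (iotaL n) ψ (f a) x‖ ≤ B := by
    intro ψ hψ hcψ a
    obtain ⟨B, hB⟩ := Cv_bdd N (f a) ψ hψ.continuous hcψ hNm p hp hN (hfN a)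
    refine ⟨B, fun x hx => ?_⟩
    rw [← toUp_surj hn x]
    exact hB _ _ hx
  have bdM : ∀ (ψ : EuclideanSpace ℝ (Fin (n - 1)) → ℝ), ContDiff ℝ (⊤ : ℕ∞) ψ → HasCompactSupport ψ → 
      ∃ B : ℝ, ∀ a, ∀ x : EuclideanSpace ℝ (Fin n), 0 < x (lastIdx n hn) → ‖Cv (iotaL n) ψ (f a) x‖ ≤ B := fun ψ hψ hcψ =>
    fin_bd (fun x : EuclideanSpace ℝ (Fin n) => 0 < x (lastIdx n hn)) (fun a x => ‖Cv (iotaL n) ψ (f a) x‖) (bd ψ hψ hcψ)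
  have dec : ∀ (ψ : EuclideanSpace ℝ (Fin (n - 1)) → ℝ), ContDiff ℝ (⊤ : ℕ∞) ψ → HasCompactSupport ψ → ∀ R : ℝ,
      ∃ D : ℝ, ∀ x : EuclideanSpace ℝ (Fin n), 0 < x (lastIdx n hn) → ‖x‖ ≤ R → ∀ a, ‖Cv (iotaL n) ψ (f a) x‖ ≤ D * x (lastIdx n hn) := by
    intro ψ hψ hcψ R
    obtain ⟨B0, hB0⟩ := bdM ψ hψ hcψ
    obtain ⟨B1, hB1⟩ := fin_bd (T := Fin M × Fin (n - 1)) (fun x : EuclideanSpace ℝ (Fin n) => 0 < x (lastIdx n hn)) (fun q x => ‖Cv (iotaL n) (pd q.2 ψ) (f q.1) x‖)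
      (fun q => bd _ (pd_smooth _ hψ) (pd_compact _ hcψ) q.1)
    obtain ⟨B2, hB2⟩ := fin_bd (T := Fin M × Fin (n - 1) × Fin (n - 1)) (fun x : EuclideanSpace ℝ (Fin n) => 0 < x (lastIdx n hn)) (fun q x => ‖Cv (iotaL n) (pd q.2.1 (pd q.2.2 ψ)) (f q.1) x‖)
      (fun q => bd _ (pd_smooth _ (pd_smooth _ hψ)) (pd_compact _ (pd_compact _ hcψ)) q.1)
    refine linear_decay A κ₀ hκ₀ hA (lastIdx n hn) (fun a => Cv (iotaL n) ψ (f a)) 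
      (fun a => Cv_contDiff2 (iotaL n) (lastIdx n hn) hl ψ hψ.continuous hcψ _ (hf a))
      (fun x hx a => Cv_sys hn f A hf hL ψ hψ.continuous hcψ x hx a) (max B0 (max B1 B2))
      (fun x hx a => (hB0 a x hx).trans (le_max_left _ _)) ?_ ?_ ?_ R
    · intro x hx a r hr
      obtain ⟨i, rfl⟩ := ne_last hn r hr
      rw [Cv_pdh hn (f a) (hf a) i ψ hψ hcψ x hx]
      exact (hB1 (a, i) x hx).trans ((le_max_left _ _).trans (le_max_right _ _))
    · intro x hx a r s hr hs
      obtain ⟨i, rfl⟩ := ne_last hn r hr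
      obtain ⟨j, rfl⟩ := ne_last hn s hs
      rw [Cv_pdh2 hn (f a) (hf a) j i ψ hψ hcψ x hx]
      exact (hB2 (a, i, j) x hx).trans ((le_max_right _ _).trans (le_max_right _ _))
    · intro x a
      simp_rw [toUp_add_last hn x]
      exact Cv_lim N (f a) ψ hψ.continuous hcψ hNm p hp hn (hf a).continuousOn hN (hfN a) (hlim a) (xinit x)
  obtain ⟨i, hi⟩ : ∃ i : Fin (n - 1), (i : ℕ) = 0 := ⟨⟨0, by omega⟩, rfl⟩
  have hi0 : finUp i ≠ lastIdx n hn := by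
    intro h
    have := congrArg Fin.val h
    simp only [finUp, lastIdx] at this
    omega
  obtain ⟨Φ, hΦ0, hΦ1⟩ : ∃ Φ : ℕ → EuclideanSpace ℝ (Fin (n - 1)) → ℝ, Φ 0 = φ ∧ ∀ k, Φ (k + 1) = pd i (Φ k) :=
    ⟨fun k => (pd i)^[k] φ, rfl, fun k => Function.iterate_succ_apply' _ _ _⟩
  have hΦ : ∀ k, ContDiff ℝ (⊤ : ℕ∞) (Φ k) ∧ HasCompactSupport (Φ k) := by
    intro k
    induction k with
    | zero => rw [hΦ0]; exact ⟨hφ, hc⟩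
    | succ k ih => rw [hΦ1]; exact ⟨pd_smooth i ih.1, pd_compact i ih.2⟩
  have hd : ∀ k a, ∀ x : EuclideanSpace ℝ (Fin n), 0 < x (lastIdx n hn) → pd (finUp i) (Cv (iotaL n) (Φ k) (f a)) x = Cv (iotaL n) (Φ (k + 1)) (f a) x := by
    intro k a x hx
    rw [hΦ1]
    exact Cv_pdh hn (f a) (hf a) i _ (hΦ k).1 (hΦ k).2 x hx
  have hv : ∀ k a, ContDiffOn ℝ 2 (Cv (iotaL n) (Φ k) (f a)) {x | 0 < x (lastIdx n hn)} := fun k a =>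
    Cv_contDiff2 (iotaL n) (lastIdx n hn) hl _ (hΦ k).1.continuous (hΦ k).2 _ (hf a)
  have h1 := boot A κ₀ hκ₀ hA (lastIdx n hn) (finUp i) hi0 (fun k a => Cv (iotaL n) (Φ k) (f a)) hv
    (fun k x hx a => Cv_sys hn f A hf hL _ (hΦ k).1.continuous (hΦ k).2 x hx a)
    (fun k R => dec _ (hΦ k).1 (hΦ k).2 R)
    (fun k => by
      obtain ⟨B, hB⟩ := bdM _ (hΦ k).1 (hΦ k).2
      exact ⟨B, fun x hx a => hB a x hx⟩) hd
  have h2 := line_const (lastIdx n hn) (finUp i) hi0 _ _ (hv 0 a) (hd 0 a) (h1 a)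
  rw [hΦ0] at h2
  have h3 := Cv_zero_of_const N (f a) φ hφ.continuous hc hNm p hp hN (hfN a) i (xinit x) (x (lastIdx n hn)) hx
    (by rw [toUp_surj hn x]; exact h2 x hx)
  rwa [toUp_surj hn x] at h3

lemma Cv_recover (g : EuclideanSpace ℝ (Fin n) → ℂ) (hg : ContinuousOn g {x | 0 < x (lastIdx n hn)})
    (h : ∀ (φ : EuclideanSpace ℝ (Fin (n - 1)) → ℝ), ContDiff ℝ (⊤ : ℕ∞) φ → HasCompactSupport φ → ∀ x : EuclideanSpace ℝ (Fin n), 0 < x (lastIdx n hn) → Cv (iotaL n) φ g x = 0)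
    (x : EuclideanSpace ℝ (Fin n)) (hx : 0 < x (lastIdx n hn)) : g x = 0 := by
  have hc : Continuous (fun z => g (x - iotaL n (-z))) :=
    (Cv_cont_y (iotaL n) (lastIdx n hn) (iotaL_last hn) g hg x hx).comp continuous_neg
  have h1 := moll_tendsto hc 0
  have h2 : ∀ m, moll m (fun z => g (x - iotaL n (-z))) 0 = 0 := fun m => by
    rw [← h _ ((mbump (n - 1) m).contDiff_normed (μ := volume)) (mbump (n - 1) m).hasCompactSupport_normed x hx]
    show ∫ y, _ = ∫ y, _
    simp
  simp_rw [h2] at h1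
  have := tendsto_nhds_unique h1 tendsto_const_nhds
  simpa using this
end fin

/-- Uniqueness for the `L^p` Dirichlet problem in the upper half space:
a `C²` null solution of an elliptic system with `N_κ u ∈ L^p` and vanishing
nontangential trace a.e. vanishes identically in `ℝⁿ₊`. -/
theorem statement0
    (n M : ℕ) (hn : 2 ≤ n) (hM : 1 ≤ M)
    (A : Fin n → Fin n → Fin M → Fin M → ℂ)
    (hA : LegendreHadamard A)
    (p : ℝ) (hp : 1 < p) (κ : ℝ) (hκ : 0 < κ)
    (u : EuclideanSpace ℝ (Fin n) → EuclideanSpace ℂ (Fin M))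
    (hu : ContDiffOn ℝ 2 u (upperHalfSpace n))
    (hLu : ∀ x ∈ upperHalfSpace n, ∀ α : Fin M,
      ∑ r, ∑ s, ∑ β, A r s α β * pd r (pd s (fun y => u y β)) x = 0)
    (hN : ∫⁻ x' : EuclideanSpace ℝ (Fin (n - 1)), (ntMax κ u x') ^ p < ∞)
    (hlim : ∀ᵐ x' : EuclideanSpace ℝ (Fin (n - 1)),
      Filter.Tendsto (fun q : (EuclideanSpace ℝ (Fin (n - 1))) × ℝ => u (toUp q.1 q.2))
        (ntFilter κ x') (nhds 0)) :
    ∀ x ∈ upperHalfSpace n, u x = 0 := by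
  have hn0 : 0 < n := by omega
  obtain ⟨κ₀, hκ₀, hA⟩ := hA
  have hUe : upperHalfSpace n = {x | 0 < x (lastIdx n hn0)} := by
    ext x
    simp only [upperHalfSpace, xlast, dif_pos hn0, lastIdx]
  rw [hUe] at hu hLu ⊢
  have hf : ∀ a, ContDiffOn ℝ 2 (fun y => u y a) {x | 0 < x (lastIdx n hn0)} := fun a =>
    (EuclideanSpace.proj (𝕜 := ℂ) a).restrictScalars ℝ |>.contDiff.comp_contDiffOn hu
  have hlim' : ∀ a, ∀ᵐ z, Tendsto (fun s : ℝ => u (toUp z s) a) (𝓝[>] 0) (𝓝 0) := by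
    intro a
    filter_upwards [hlim] with z hz
    have h1 : Tendsto (fun s : ℝ => (z, s)) (𝓝[>] 0) (ntFilter κ z) := by
      refine tendsto_inf.2 ⟨?_, tendsto_principal.2 ?_⟩
      · have : Continuous (fun s : ℝ => (z, s)) := by fun_prop
        exact (this.tendsto 0).mono_left nhdsWithin_le_nhds
      · filter_upwards [self_mem_nhdsWithin] with s hs
        refine ⟨hs, ?_⟩
        rw [dist_self]
        exact mul_pos hκ hs
    have h2 := ((EuclideanSpace.proj (𝕜 := ℂ) a).continuous.tendsto (0 : EuclideanSpace ℂ (Fin M))).comp (hz.comp h1)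
    simpa [Function.comp_def] using h2
  intro x hx
  ext a
  refine Cv_recover hn0 (fun y => u y a) (hf a).continuousOn (fun φ hφ hc x hx => ?_) x hx
  refine Cv_core hn0 (fun a y => u y a) hn A κ₀ hκ₀ hA hf (fun x hx a => hLu x hx a) (ntMax κ u) (ntMax_measurable κ u) p hp hN ?_ hlim' φ hφ hc a x hx
  intro a y t ht
  refine le_trans ?_ (le_ntMax κ hκ u y t ht)
  rw [← ofReal_norm_eq_enorm, ← ofReal_norm_eq_enorm]
  exact ENNReal.ofReal_le_ofReal (PiLp.norm_apply_le _ _)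

end
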